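/- Let 2 ≤ e < ∞, let κ ∈ Z^ℓ be a multicharge with κ_l − κ_{l+1} ≥ n for 1 ≤ l < ℓ, and let (O,t) be an e-idempotent subring of a field K. Let i ∈ I^n and let φ ∈ O[X_1,…,X_n] be a polynomial such that φ(t) := φ([c_1(t)]_t,…,[c_n(t)]_t) is a unit of O for every t ∈ Std(i). Then f_i^φ := Σ_{t ∈ Std(i)} φ(t)^{−1} F_t lies in the O-subalgebra L(O) of H_n(K,t,κ) generated by L_1,…,L_n; in particular f_i^φ lies in the image of H_n(O,t,κ). -/

import Mathlib

open scoped BigOperators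
open scoped Classical

namespace Paper

/-! ## Quantum integers -/

/-- The quantum integer `[d]_x` in a field, for `d ∈ ℤ`. -/
noncomputable def qint {K : Type*} [Field K] (x : K) (d : ℤ) : K :=
  if 0 ≤ d then ∑ k ∈ Finset.range d.toNat, x ^ k
  else -∑ k ∈ Finset.range (-d).toNat, x ^ (-((k : ℤ) + 1))

/-- The quantum integer `[d]_t` in a commutative ring, for an invertible `t` and `d ∈ ℤ`. -/
def qintU {O : Type*} [CommRing O] (t : Oˣ) (d : ℤ) : O :=
  if 0 ≤ d then ∑ k ∈ Finset.range d.toNat, (t : O) ^ k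
  else -∑ k ∈ Finset.range (-d).toNat, ((t ^ (-((k : ℤ) + 1)) : Oˣ) : O)

/-! ## Nodes, multipartitions and standard tableaux -/

/-- A node `(l, r, c)`: component `l`, row `r`, column `c` (all `0`-based). -/
abbrev Node : Type := ℕ × ℕ × ℕ

/-- `nodeBelow A B` holds when `B` is strictly below `A`, i.e. `A < B` lexicographically. -/
def nodeBelow (A B : Node) : Prop :=
  A.1 < B.1 ∨ (A.1 = B.1 ∧ (A.2.1 < B.2.1 ∨ (A.2.1 = B.2.1 ∧ A.2.2 < B.2.2)))

/-- An `ℓ`-multipartition of `n`. -/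
structure Multipartition (ℓ n : ℕ) : Type where
  part : ℕ → ℕ → ℕ
  comp_bound : ∀ l, ℓ ≤ l → ∀ r, part l r = 0
  antitone : ∀ l, Antitone (part l)
  row_bound : ∀ l r, n ≤ r → part l r = 0
  size : (∑ l ∈ Finset.range ℓ, ∑ r ∈ Finset.range n, part l r) = n

/-- The diagram of a multipartition. -/
def Multipartition.diagram {ℓ n : ℕ} (μ : Multipartition ℓ n) : Set Node :=
  {A | A.2.2 < μ.part A.1 A.2.1}

/-- A standard tableau: a bijection from the diagram of its shape onto `{1, …, n}`
that increases along rows and down columns of each component (it takes the value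
`0` off the diagram, so that it is determined by its entries). -/
structure StdTableau (ℓ n : ℕ) : Type where
  shape : Multipartition ℓ n
  entry : Node → ℕ
  entry_zero : ∀ A, A ∉ shape.diagram → entry A = 0
  bijOn : Set.BijOn entry shape.diagram (Set.Icc 1 n)
  row_inc : ∀ l r c, (l, r, c + 1) ∈ shape.diagram → entry (l, r, c) < entry (l, r, c + 1)
  col_inc : ∀ l r c, (l, r + 1, c) ∈ shape.diagram → entry (l, r, c) < entry (l, r + 1, c)

/-- The node of a standard tableau containing the entry `k`. -/
noncomputable def StdTableau.node {ℓ n : ℕ} (T : StdTableau ℓ n) (k : ℕ) : Node :=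
  Function.invFunOn T.entry T.shape.diagram k

/-- The content `c_k(T) = κ_l + c - r` of the entry `k` in the tableau `T`
(`1 ≤ k ≤ n`). -/
noncomputable def content {ℓ n : ℕ} (κ : ℕ → ℤ) (T : StdTableau ℓ n) (k : ℕ) : ℤ :=
  κ (T.node k).1 + ((T.node k).2.2 : ℤ) - ((T.node k).2.1 : ℤ)

/-- The residue sequence of a standard tableau, in `I^n` with `I = ℤ/eℤ`. -/
noncomputable def resSeq {ℓ n : ℕ} (e : ℕ) (κ : ℕ → ℤ) (T : StdTableau ℓ n) :
    Fin n → ZMod e :=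
  fun k => ((content κ T (k.1 + 1) : ℤ) : ZMod e)

/-- The residue of a node. -/
def resNode (e : ℕ) (κ : ℕ → ℤ) (A : Node) : ZMod e :=
  ((κ A.1 + (A.2.2 : ℤ) - (A.2.1 : ℤ) : ℤ) : ZMod e)

/-- A set of nodes is the diagram of a multipartition (with at most `ℓ` components)
iff it is finite and downward closed in rows and columns. -/
def IsDiagramSet (ℓ : ℕ) (S : Set Node) : Prop :=
  S.Finite ∧ (∀ A ∈ S, A.1 < ℓ) ∧
    (∀ l r c, (l, r, c + 1) ∈ S → (l, r, c) ∈ S) ∧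
    (∀ l r c, (l, r + 1, c) ∈ S → (l, r, c) ∈ S)

/-- `A` is an addable node of the diagram `S`. -/
def Addable (ℓ : ℕ) (S : Set Node) (A : Node) : Prop :=
  A ∉ S ∧ IsDiagramSet ℓ (S ∪ {A})

/-- `A` is a removable node of the diagram `S`. -/
def Removable (ℓ : ℕ) (S : Set Node) (A : Node) : Prop :=
  A ∈ S ∧ IsDiagramSet ℓ (S \ {A})

/-- `d_A(S)`: the number of addable nodes of `S` of the same residue as `A` strictly
below `A`, minus the number of removable ones. -/
noncomputable def dNode (ℓ e : ℕ) (κ : ℕ → ℤ) (S : Set Node) (A : Node) : ℤ :=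
  (Set.ncard {B | Addable ℓ S B ∧ resNode e κ B = resNode e κ A ∧ nodeBelow A B} : ℤ) -
    (Set.ncard {B | Removable ℓ S B ∧ resNode e κ B = resNode e κ A ∧ nodeBelow A B} : ℤ)

/-- The Brundan–Kleshchev–Wang degree `deg_e(T)` of a standard tableau, written as the
telescoping sum of the recursion `deg_e(T) = deg_e(T↓(n-1)) + d_A(Shape(T))`. -/
noncomputable def degE {ℓ n : ℕ} (e : ℕ) (κ : ℕ → ℤ) (T : StdTableau ℓ n) : ℤ :=
  ∑ m ∈ Finset.Icc 1 n,
    dNode ℓ e κ {A | A ∈ T.shape.diagram ∧ T.entry A ≤ m} (T.node m)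

/-- The restriction of the diagram of `T` to entries `≤ m` (the diagram of `Shape(T↓m)`). -/
def restDiag {ℓ n : ℕ} (T : StdTableau ℓ n) (m : ℕ) : Set Node :=
  {A | A ∈ T.shape.diagram ∧ T.entry A ≤ m}

/-- Dominance order on standard tableaux: `domTab S T` iff `S ⊵ T`. -/
def domTab {ℓ n : ℕ} (S T : StdTableau ℓ n) : Prop :=
  ∀ m l i : ℕ,
    Set.ncard {A | A ∈ restDiag T m ∧ (A.1 < l ∨ (A.1 = l ∧ A.2.1 ≤ i))} ≤
      Set.ncard {A | A ∈ restDiag S m ∧ (A.1 < l ∨ (A.1 = l ∧ A.2.1 ≤ i))}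

/-- Interchange the entries `r` and `r + 1` in an entry function. -/
def swapEntry (f : Node → ℕ) (r : ℕ) : Node → ℕ :=
  fun A => if f A = r then r + 1 else if f A = r + 1 then r else f A

/-- `ρ_r(T) = c_r(T) - c_{r+1}(T)`, the axial distance. -/
noncomputable def rhoTab {ℓ n : ℕ} (κ : ℕ → ℤ) (T : StdTableau ℓ n) (r : ℕ) : ℤ :=
  content κ T r - content κ T (r + 1)

/-- The entry function of the row-reading initial tableau `t^λ`. -/
noncomputable def tlamEntry {ℓ n : ℕ} (μ : Multipartition ℓ n) (A : Node) : ℕ :=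
  if A ∈ μ.diagram then
    (∑ l ∈ Finset.range A.1, ∑ r ∈ Finset.range n, μ.part l r) +
      (∑ r ∈ Finset.range A.2.1, μ.part A.1 r) + A.2.2 + 1
  else 0

/-- The finite set of possible contents of standard tableaux of size `n`. -/
noncomputable def contFinset (ℓ n : ℕ) (κ : ℕ → ℤ) : Finset ℤ :=
  ((Finset.range ℓ ×ˢ Finset.range n ×ˢ Finset.range n).image
      (fun x => κ x.1 + (x.2.2 : ℤ) - (x.2.1 : ℤ))).filter
    (fun c => ∃ T : StdTableau ℓ n, ∃ k, 1 ≤ k ∧ k ≤ n ∧ content κ T k = c)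

/-- The standard tableau (if any) obtained from `T` by interchanging the entries
`r` and `r + 1`; i.e. `T·s_r` if it is standard, and `none` otherwise. -/
noncomputable def oSwapO {ℓ n : ℕ} (T : StdTableau ℓ n) (r : ℕ) :
    Option (StdTableau ℓ n) :=
  if h : ∃ V : StdTableau ℓ n, V.entry = swapEntry T.entry r then some (Classical.choose h)
  else none

/-- `oSwap` extended to `Option`. -/
noncomputable def oSwap {ℓ n : ℕ} (X : Option (StdTableau ℓ n)) (r : ℕ) :
    Option (StdTableau ℓ n) :=
  X.bind fun T => oSwapO T r

/-- Evaluate a seminormal coefficient system on an optional tableau (by `0` if none). -/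
noncomputable def aE {ℓ n : ℕ} {K : Type*} [Field K] (α : ℕ → StdTableau ℓ n → K) (r : ℕ)
    (X : Option (StdTableau ℓ n)) : K :=
  X.elim 0 (α r)

/-! ## Separation and idempotent subrings -/

/-- `(K, t)` separates `Std(P_n)` (field version):
`[n]!_t ∏_{1 ≤ l < m ≤ ℓ} ∏_{-n < d < n} [κ_l - κ_m + d]_t ≠ 0`. -/
def SeparatesF {K : Type*} [Field K] (t : Kˣ) (n ℓ : ℕ) (κ : ℕ → ℤ) : Prop :=
  ((∏ d ∈ Finset.Icc 1 n, qint (t : K) (d : ℤ)) *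
      ∏ l ∈ Finset.range ℓ, ∏ m ∈ Finset.Ioo l ℓ,
        ∏ d ∈ Finset.Ioo (-(n : ℤ)) (n : ℤ), qint (t : K) (κ l - κ m + d)) ≠ 0

/-- `(O, t)` separates `Std(P_n)` (subring version): the separation element is a unit. -/
def SeparatesU {O : Type*} [CommRing O] (t : Oˣ) (n ℓ : ℕ) (κ : ℕ → ℤ) : Prop :=
  IsUnit ((∏ d ∈ Finset.Icc 1 n, qintU t (d : ℤ)) *
      ∏ l ∈ Finset.range ℓ, ∏ m ∈ Finset.Ioo l ℓ,
        ∏ d ∈ Finset.Ioo (-(n : ℤ)) (n : ℤ), qintU t (κ l - κ m + d))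

/-- `(O, t)` is an `e`-idempotent subring of the field `K`. -/
def IsIdempotentSubring {K : Type*} [Field K] (O : Subring K) (t : Oˣ) (e n ℓ : ℕ)
    (κ : ℕ → ℤ) : Prop :=
  SeparatesU t n ℓ κ ∧
    (∀ k : ℤ, ¬(e : ℤ) ∣ k → IsUnit (qintU t k)) ∧
    (∀ k : ℤ, (e : ℤ) ∣ k → qintU t k ∈ Ideal.jacobson (⊥ : Ideal O))

/-! ## The cyclotomic Hecke algebra, by generators and relations -/

/-- Generators `L_1, …, L_n`, `T_1, …, T_{n-1}` (here `0`-based). -/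
inductive HeckeGen (n : ℕ) : Type
  | L : Fin n → HeckeGen n
  | T : Fin (n - 1) → HeckeGen n

/-- The position `r` of the pair `(r, r+1)` interchanged by the `r`-th transposition. -/
def pL {n : ℕ} (r : Fin (n - 1)) : Fin n := ⟨r.1, by have := r.2; omega⟩

/-- The position `r + 1` of the pair interchanged by the `r`-th transposition. -/
def pR {n : ℕ} (r : Fin (n - 1)) : Fin n := ⟨r.1 + 1, by have := r.2; omega⟩

/-- The position `r + 2`, used in braid relations. -/
def pM {n : ℕ} (r : Fin (n - 1)) (hr : r.1 + 1 < n - 1) : Fin n := ⟨r.1 + 2, by omega⟩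

/-- The free algebra generator `L_k`. -/
def hL (R : Type*) [CommRing R] {n : ℕ} (k : Fin n) : FreeAlgebra R (HeckeGen n) :=
  FreeAlgebra.ι R (HeckeGen.L k)

/-- The free algebra generator `T_r`. -/
def hT (R : Type*) [CommRing R] {n : ℕ} (r : Fin (n - 1)) : FreeAlgebra R (HeckeGen n) :=
  FreeAlgebra.ι R (HeckeGen.T r)

/-- The defining relations of the integral cyclotomic Hecke algebra `H_n(R, t, κ)`. -/
inductive HeckeRel (R : Type*) [CommRing R] (t : Rˣ) (n ℓ : ℕ) (κ : ℕ → ℤ) :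
    FreeAlgebra R (HeckeGen n) → FreeAlgebra R (HeckeGen n) → Prop
  | cyc (h : 0 < n) :
      HeckeRel R t n ℓ κ
        (((List.range ℓ).map fun l =>
          hL R (⟨0, h⟩ : Fin n) - algebraMap R _ (qintU t (κ l))).prod) 0
  | quad (r : Fin (n - 1)) :
      HeckeRel R t n ℓ κ ((hT R r + 1) * (hT R r - algebraMap R _ (t : R))) 0
  | LL (k m : Fin n) : HeckeRel R t n ℓ κ (hL R k * hL R m) (hL R m * hL R k)
  | TTfar (r s : Fin (n - 1)) (h : r.1 + 1 < s.1 ∨ s.1 + 1 < r.1) :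
      HeckeRel R t n ℓ κ (hT R r * hT R s) (hT R s * hT R r)
  | braid (r s : Fin (n - 1)) (h : s.1 = r.1 + 1) :
      HeckeRel R t n ℓ κ (hT R r * hT R s * hT R r) (hT R s * hT R r * hT R s)
  | TL (r : Fin (n - 1)) (k : Fin n) (h : k.1 ≠ r.1 ∧ k.1 ≠ r.1 + 1) :
      HeckeRel R t n ℓ κ (hT R r * hL R k) (hL R k * hT R r)
  | LT (r : Fin (n - 1)) :
      HeckeRel R t n ℓ κ (hL R (pR r) * (hT R r - algebraMap R _ (t : R) + 1))
        (hT R r * hL R (pL r) + 1)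

/-- The integral cyclotomic Hecke algebra of type `A`, `H_n(R, t, κ)`. -/
noncomputable abbrev CycHecke (R : Type*) [CommRing R] (t : Rˣ) (n ℓ : ℕ) (κ : ℕ → ℤ) :
    Type _ :=
  RingQuot (HeckeRel R t n ℓ κ)

/-- The generator `L_k` of the cyclotomic Hecke algebra. -/
noncomputable def Lgen (R : Type*) [CommRing R] (t : Rˣ) (n ℓ : ℕ) (κ : ℕ → ℤ)
    (k : Fin n) : CycHecke R t n ℓ κ :=
  RingQuot.mkAlgHom R (HeckeRel R t n ℓ κ) (hL R k)

/-- The generator `T_r` of the cyclotomic Hecke algebra. -/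
noncomputable def Tgen (R : Type*) [CommRing R] (t : Rˣ) (n ℓ : ℕ) (κ : ℕ → ℤ)
    (r : Fin (n - 1)) : CycHecke R t n ℓ κ :=
  RingQuot.mkAlgHom R (HeckeRel R t n ℓ κ) (hT R r)

end Paper
/-! ## Quiver Hecke (KLR) algebras, by generators and relations -/

namespace Paper

/-- Generators `e(i)` (`i ∈ I^n`), `ψ_1, …, ψ_{n-1}`, `y_1, …, y_n` (here `0`-based). -/
inductive KLRGen (n e : ℕ) : Type
  | idem : (Fin n → ZMod e) → KLRGen n e
  | psi : Fin (n - 1) → KLRGen n e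
  | y : Fin n → KLRGen n e

/-- The free algebra generator `e(i)`. -/
def kE (R : Type*) [CommRing R] {n e : ℕ} (i : Fin n → ZMod e) :
    FreeAlgebra R (KLRGen n e) :=
  FreeAlgebra.ι R (KLRGen.idem i)

/-- The free algebra generator `ψ_r`. -/
def kPsi (R : Type*) [CommRing R] {n e : ℕ} (r : Fin (n - 1)) :
    FreeAlgebra R (KLRGen n e) :=
  FreeAlgebra.ι R (KLRGen.psi r)

/-- The free algebra generator `y_k`. -/
def kY (R : Type*) [CommRing R] {n e : ℕ} (k : Fin n) : FreeAlgebra R (KLRGen n e) :=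
  FreeAlgebra.ι R (KLRGen.y k)

/-- `s_r · i`: interchange the entries of `i` at positions `r` and `r + 1`. -/
def swapSeq {n e : ℕ} (i : Fin n → ZMod e) (r : Fin (n - 1)) : Fin n → ZMod e :=
  fun k => if k = pL r then i (pR r) else if k = pR r then i (pL r) else i k

/-- The defining relations of the cyclotomic quiver Hecke algebra `R_n^Λ(R)` where
`Λ = Σ_l Λ_{κ_l mod e}`. -/
inductive KLRRel (R : Type*) [CommRing R] (n e ℓ : ℕ) [NeZero e] (κ : ℕ → ℤ) :
    FreeAlgebra R (KLRGen n e) → FreeAlgebra R (KLRGen n e) → Prop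
  | cyc (h : 0 < n) (i : Fin n → ZMod e) :
      KLRRel R n e ℓ κ
        ((kY R (⟨0, h⟩ : Fin n)) ^
            (((Finset.range ℓ).filter fun l => ((κ l : ZMod e) = i ⟨0, h⟩)).card) *
          kE R i) 0
  | orth (i j : Fin n → ZMod e) (h : i ≠ j) : KLRRel R n e ℓ κ (kE R i * kE R j) 0
  | idem (i : Fin n → ZMod e) : KLRRel R n e ℓ κ (kE R i * kE R i) (kE R i)
  | complete : KLRRel R n e ℓ κ (∑ i : Fin n → ZMod e, kE R i) 1
  | yE (k : Fin n) (i : Fin n → ZMod e) :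
      KLRRel R n e ℓ κ (kY R k * kE R i) (kE R i * kY R k)
  | psiE (r : Fin (n - 1)) (i : Fin n → ZMod e) :
      KLRRel R n e ℓ κ (kPsi R r * kE R i) (kE R (swapSeq i r) * kPsi R r)
  | yy (k m : Fin n) : KLRRel R n e ℓ κ (kY R k * kY R m) (kY R m * kY R k)
  | psiyEq (r : Fin (n - 1)) (i : Fin n → ZMod e) (h : i (pL r) = i (pR r)) :
      KLRRel R n e ℓ κ (kPsi R r * kY R (pR r) * kE R i)
        ((kY R (pL r) * kPsi R r + 1) * kE R i)
  | psiyNe (r : Fin (n - 1)) (i : Fin n → ZMod e) (h : i (pL r) ≠ i (pR r)) :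
      KLRRel R n e ℓ κ (kPsi R r * kY R (pR r) * kE R i)
        (kY R (pL r) * kPsi R r * kE R i)
  | ypsiEq (r : Fin (n - 1)) (i : Fin n → ZMod e) (h : i (pL r) = i (pR r)) :
      KLRRel R n e ℓ κ (kY R (pR r) * kPsi R r * kE R i)
        ((kPsi R r * kY R (pL r) + 1) * kE R i)
  | ypsiNe (r : Fin (n - 1)) (i : Fin n → ZMod e) (h : i (pL r) ≠ i (pR r)) :
      KLRRel R n e ℓ κ (kY R (pR r) * kPsi R r * kE R i)
        (kPsi R r * kY R (pL r) * kE R i)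
  | psiyFar (r : Fin (n - 1)) (k : Fin n) (h : k.1 ≠ r.1 ∧ k.1 ≠ r.1 + 1) :
      KLRRel R n e ℓ κ (kPsi R r * kY R k) (kY R k * kPsi R r)
  | psipsiFar (r s : Fin (n - 1)) (h : r.1 + 1 < s.1 ∨ s.1 + 1 < r.1) :
      KLRRel R n e ℓ κ (kPsi R r * kPsi R s) (kPsi R s * kPsi R r)
  | quadEq (r : Fin (n - 1)) (i : Fin n → ZMod e) (h : i (pL r) = i (pR r)) :
      KLRRel R n e ℓ κ (kPsi R r ^ 2 * kE R i) 0
  | quadR (r : Fin (n - 1)) (i : Fin n → ZMod e)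
      (h1 : i (pR r) = i (pL r) + 1) (h2 : i (pL r) ≠ i (pR r) + 1) :
      KLRRel R n e ℓ κ (kPsi R r ^ 2 * kE R i) ((kY R (pL r) - kY R (pR r)) * kE R i)
  | quadL (r : Fin (n - 1)) (i : Fin n → ZMod e)
      (h1 : i (pL r) = i (pR r) + 1) (h2 : i (pR r) ≠ i (pL r) + 1) :
      KLRRel R n e ℓ κ (kPsi R r ^ 2 * kE R i) ((kY R (pR r) - kY R (pL r)) * kE R i)
  | quadBoth (r : Fin (n - 1)) (i : Fin n → ZMod e)
      (h1 : i (pR r) = i (pL r) + 1) (h2 : i (pL r) = i (pR r) + 1) :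
      KLRRel R n e ℓ κ (kPsi R r ^ 2 * kE R i)
        ((kY R (pR r) - kY R (pL r)) * (kY R (pL r) - kY R (pR r)) * kE R i)
  | quadNone (r : Fin (n - 1)) (i : Fin n → ZMod e) (h1 : i (pL r) ≠ i (pR r))
      (h2 : i (pR r) ≠ i (pL r) + 1) (h3 : i (pL r) ≠ i (pR r) + 1) :
      KLRRel R n e ℓ κ (kPsi R r ^ 2 * kE R i) (kE R i)
  | braidR (r : Fin (n - 1)) (hr : r.1 + 1 < n - 1) (i : Fin n → ZMod e)
      (h0 : i (pM r hr) = i (pL r)) (h1 : i (pR r) = i (pL r) + 1)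
      (h2 : i (pL r) ≠ i (pR r) + 1) :
      KLRRel R n e ℓ κ (kPsi R r * kPsi R ⟨r.1 + 1, hr⟩ * kPsi R r * kE R i)
        ((kPsi R ⟨r.1 + 1, hr⟩ * kPsi R r * kPsi R ⟨r.1 + 1, hr⟩ - 1) * kE R i)
  | braidL (r : Fin (n - 1)) (hr : r.1 + 1 < n - 1) (i : Fin n → ZMod e)
      (h0 : i (pM r hr) = i (pL r)) (h1 : i (pL r) = i (pR r) + 1)
      (h2 : i (pR r) ≠ i (pL r) + 1) :
      KLRRel R n e ℓ κ (kPsi R r * kPsi R ⟨r.1 + 1, hr⟩ * kPsi R r * kE R i)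
        ((kPsi R ⟨r.1 + 1, hr⟩ * kPsi R r * kPsi R ⟨r.1 + 1, hr⟩ + 1) * kE R i)
  | braidBoth (r : Fin (n - 1)) (hr : r.1 + 1 < n - 1) (i : Fin n → ZMod e)
      (h0 : i (pM r hr) = i (pL r)) (h1 : i (pR r) = i (pL r) + 1)
      (h2 : i (pL r) = i (pR r) + 1) :
      KLRRel R n e ℓ κ (kPsi R r * kPsi R ⟨r.1 + 1, hr⟩ * kPsi R r * kE R i)
        ((kPsi R ⟨r.1 + 1, hr⟩ * kPsi R r * kPsi R ⟨r.1 + 1, hr⟩ +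
            kY R (pL r) - 2 * kY R (pR r) + kY R (pM r hr)) * kE R i)
  | braidNone (r : Fin (n - 1)) (hr : r.1 + 1 < n - 1) (i : Fin n → ZMod e)
      (h : ¬(i (pM r hr) = i (pL r) ∧
        (i (pR r) = i (pL r) + 1 ∨ i (pL r) = i (pR r) + 1))) :
      KLRRel R n e ℓ κ (kPsi R r * kPsi R ⟨r.1 + 1, hr⟩ * kPsi R r * kE R i)
        (kPsi R ⟨r.1 + 1, hr⟩ * kPsi R r * kPsi R ⟨r.1 + 1, hr⟩ * kE R i)

/-- The cyclotomic quiver Hecke algebra `R_n^Λ(R)`, `Λ = Σ_l Λ_{κ_l mod e}`. -/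
noncomputable abbrev KLR (R : Type*) [CommRing R] (n e ℓ : ℕ) [NeZero e] (κ : ℕ → ℤ) :
    Type _ :=
  RingQuot (KLRRel R n e ℓ κ)

/-- The generator `e(i)` of the cyclotomic quiver Hecke algebra. -/
noncomputable def KeGen (R : Type*) [CommRing R] (n e ℓ : ℕ) [NeZero e] (κ : ℕ → ℤ)
    (i : Fin n → ZMod e) : KLR R n e ℓ κ :=
  RingQuot.mkAlgHom R (KLRRel R n e ℓ κ) (kE R i)

/-- The generator `ψ_r` of the cyclotomic quiver Hecke algebra. -/
noncomputable def KpsiGen (R : Type*) [CommRing R] (n e ℓ : ℕ) [NeZero e] (κ : ℕ → ℤ)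
    (r : Fin (n - 1)) : KLR R n e ℓ κ :=
  RingQuot.mkAlgHom R (KLRRel R n e ℓ κ) (kPsi R r)

/-- The generator `y_k` of the cyclotomic quiver Hecke algebra. -/
noncomputable def KyGen (R : Type*) [CommRing R] (n e ℓ : ℕ) [NeZero e] (κ : ℕ → ℤ)
    (k : Fin n) : KLR R n e ℓ κ :=
  RingQuot.mkAlgHom R (KLRRel R n e ℓ κ) (kY R k)

end Paper
/-! ## The deformed cyclotomic quiver Hecke algebra -/

namespace Paper

/-- `y_k^⟨d⟩ = t^d y_k + [d]_t` in the free algebra. -/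
def ydot (R : Type*) [CommRing R] (t : Rˣ) {n e : ℕ} (d : ℤ) (k : Fin n) :
    FreeAlgebra R (KLRGen n e) :=
  algebraMap R _ ((t ^ d : Rˣ) : R) * kY R k + algebraMap R _ (qintU t d)

/-- `ρ_r(i) = î_r - î_{r+1}` for `i ∈ I^n`. -/
def rhoI {n e : ℕ} (i : Fin n → ZMod e) (r : Fin (n - 1)) : ℤ :=
  ((i (pL r)).val : ℤ) - ((i (pR r)).val : ℤ)

/-- The defining relations of the deformed cyclotomic quiver Hecke algebra `R_n(O)`. -/
inductive DefKLRRel (R : Type*) [CommRing R] (t : Rˣ) (n e ℓ : ℕ) [NeZero e] (κ : ℕ → ℤ) :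
    FreeAlgebra R (KLRGen n e) → FreeAlgebra R (KLRGen n e) → Prop
  | cyc (h : 0 < n) (i : Fin n → ZMod e) :
      DefKLRRel R t n e ℓ κ
        ((((List.range ℓ).map fun l =>
            if ((κ l : ZMod e) = i ⟨0, h⟩) then
              kY R (⟨0, h⟩ : Fin n) -
                algebraMap R _ (qintU t (κ l - ((i ⟨0, h⟩).val : ℤ)))
            else 1).prod) * kE R i) 0
  | orth (i j : Fin n → ZMod e) (h : i ≠ j) : DefKLRRel R t n e ℓ κ (kE R i * kE R j) 0
  | idem (i : Fin n → ZMod e) : DefKLRRel R t n e ℓ κ (kE R i * kE R i) (kE R i)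
  | complete : DefKLRRel R t n e ℓ κ (∑ i : Fin n → ZMod e, kE R i) 1
  | yE (k : Fin n) (i : Fin n → ZMod e) :
      DefKLRRel R t n e ℓ κ (kY R k * kE R i) (kE R i * kY R k)
  | psiE (r : Fin (n - 1)) (i : Fin n → ZMod e) :
      DefKLRRel R t n e ℓ κ (kPsi R r * kE R i) (kE R (swapSeq i r) * kPsi R r)
  | yy (k m : Fin n) : DefKLRRel R t n e ℓ κ (kY R k * kY R m) (kY R m * kY R k)
  | psiyEq (r : Fin (n - 1)) (i : Fin n → ZMod e) (h : i (pL r) = i (pR r)) :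
      DefKLRRel R t n e ℓ κ (kPsi R r * kY R (pR r) * kE R i)
        ((kY R (pL r) * kPsi R r + 1) * kE R i)
  | psiyNe (r : Fin (n - 1)) (i : Fin n → ZMod e) (h : i (pL r) ≠ i (pR r)) :
      DefKLRRel R t n e ℓ κ (kPsi R r * kY R (pR r) * kE R i)
        (kY R (pL r) * kPsi R r * kE R i)
  | ypsiEq (r : Fin (n - 1)) (i : Fin n → ZMod e) (h : i (pL r) = i (pR r)) :
      DefKLRRel R t n e ℓ κ (kY R (pR r) * kPsi R r * kE R i)
        ((kPsi R r * kY R (pL r) + 1) * kE R i)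
  | ypsiNe (r : Fin (n - 1)) (i : Fin n → ZMod e) (h : i (pL r) ≠ i (pR r)) :
      DefKLRRel R t n e ℓ κ (kY R (pR r) * kPsi R r * kE R i)
        (kPsi R r * kY R (pL r) * kE R i)
  | psiyFar (r : Fin (n - 1)) (k : Fin n) (h : k.1 ≠ r.1 ∧ k.1 ≠ r.1 + 1) :
      DefKLRRel R t n e ℓ κ (kPsi R r * kY R k) (kY R k * kPsi R r)
  | psipsiFar (r s : Fin (n - 1)) (h : r.1 + 1 < s.1 ∨ s.1 + 1 < r.1) :
      DefKLRRel R t n e ℓ κ (kPsi R r * kPsi R s) (kPsi R s * kPsi R r)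
  | quadEq (r : Fin (n - 1)) (i : Fin n → ZMod e) (h : i (pL r) = i (pR r)) :
      DefKLRRel R t n e ℓ κ (kPsi R r ^ 2 * kE R i) 0
  | quadR (r : Fin (n - 1)) (i : Fin n → ZMod e)
      (h1 : i (pR r) = i (pL r) + 1) (h2 : i (pL r) ≠ i (pR r) + 1) :
      DefKLRRel R t n e ℓ κ (kPsi R r ^ 2 * kE R i)
        ((ydot R t (1 + rhoI i r) (pL r) - kY R (pR r)) * kE R i)
  | quadL (r : Fin (n - 1)) (i : Fin n → ZMod e)
      (h1 : i (pL r) = i (pR r) + 1) (h2 : i (pR r) ≠ i (pL r) + 1) :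
      DefKLRRel R t n e ℓ κ (kPsi R r ^ 2 * kE R i)
        ((ydot R t (1 - rhoI i r) (pR r) - kY R (pL r)) * kE R i)
  | quadBoth (r : Fin (n - 1)) (i : Fin n → ZMod e)
      (h1 : i (pR r) = i (pL r) + 1) (h2 : i (pL r) = i (pR r) + 1) :
      DefKLRRel R t n e ℓ κ (kPsi R r ^ 2 * kE R i)
        ((ydot R t (1 + rhoI i r) (pL r) - kY R (pR r)) *
          (ydot R t (1 - rhoI i r) (pR r) - kY R (pL r)) * kE R i)
  | quadNone (r : Fin (n - 1)) (i : Fin n → ZMod e) (h1 : i (pL r) ≠ i (pR r))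
      (h2 : i (pR r) ≠ i (pL r) + 1) (h3 : i (pL r) ≠ i (pR r) + 1) :
      DefKLRRel R t n e ℓ κ (kPsi R r ^ 2 * kE R i) (kE R i)
  | braidBoth (r : Fin (n - 1)) (hr : r.1 + 1 < n - 1) (i : Fin n → ZMod e)
      (h0 : i (pM r hr) = i (pL r)) (h1 : i (pR r) = i (pL r) + 1)
      (h2 : i (pL r) = i (pR r) + 1) :
      DefKLRRel R t n e ℓ κ
        ((kPsi R r * kPsi R ⟨r.1 + 1, hr⟩ * kPsi R r -
            kPsi R ⟨r.1 + 1, hr⟩ * kPsi R r * kPsi R ⟨r.1 + 1, hr⟩) * kE R i)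
        ((ydot R t (1 + rhoI i r) (pL r) + ydot R t (1 + rhoI i r) (pM r hr) -
            ydot R t (1 + rhoI i r) (pR r) - ydot R t (1 - rhoI i r) (pR r)) * kE R i)
  | braidR (r : Fin (n - 1)) (hr : r.1 + 1 < n - 1) (i : Fin n → ZMod e)
      (h0 : i (pM r hr) = i (pL r)) (h1 : i (pR r) = i (pL r) + 1)
      (h2 : i (pL r) ≠ i (pR r) + 1) :
      DefKLRRel R t n e ℓ κ
        ((kPsi R r * kPsi R ⟨r.1 + 1, hr⟩ * kPsi R r -
            kPsi R ⟨r.1 + 1, hr⟩ * kPsi R r * kPsi R ⟨r.1 + 1, hr⟩) * kE R i)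
        (algebraMap R _ (-(((t ^ (1 + rhoI i r) : Rˣ) : R))) * kE R i)
  | braidL (r : Fin (n - 1)) (hr : r.1 + 1 < n - 1) (i : Fin n → ZMod e)
      (h0 : i (pM r hr) = i (pL r)) (h1 : i (pL r) = i (pR r) + 1)
      (h2 : i (pR r) ≠ i (pL r) + 1) :
      DefKLRRel R t n e ℓ κ
        ((kPsi R r * kPsi R ⟨r.1 + 1, hr⟩ * kPsi R r -
            kPsi R ⟨r.1 + 1, hr⟩ * kPsi R r * kPsi R ⟨r.1 + 1, hr⟩) * kE R i)
        (kE R i)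
  | braidNone (r : Fin (n - 1)) (hr : r.1 + 1 < n - 1) (i : Fin n → ZMod e)
      (h : ¬(i (pM r hr) = i (pL r) ∧
        (i (pR r) = i (pL r) + 1 ∨ i (pL r) = i (pR r) + 1))) :
      DefKLRRel R t n e ℓ κ
        ((kPsi R r * kPsi R ⟨r.1 + 1, hr⟩ * kPsi R r -
            kPsi R ⟨r.1 + 1, hr⟩ * kPsi R r * kPsi R ⟨r.1 + 1, hr⟩) * kE R i) 0

/-- The deformed cyclotomic quiver Hecke algebra `R_n(R)`. -/
noncomputable abbrev DefKLR (R : Type*) [CommRing R] (t : Rˣ) (n e ℓ : ℕ) [NeZero e]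
    (κ : ℕ → ℤ) : Type _ :=
  RingQuot (DefKLRRel R t n e ℓ κ)

/-- The generator `f_i` of the deformed cyclotomic quiver Hecke algebra. -/
noncomputable def DfGen (R : Type*) [CommRing R] (t : Rˣ) (n e ℓ : ℕ) [NeZero e]
    (κ : ℕ → ℤ) (i : Fin n → ZMod e) : DefKLR R t n e ℓ κ :=
  RingQuot.mkAlgHom R (DefKLRRel R t n e ℓ κ) (kE R i)

/-- The generator `ψ_r` of the deformed cyclotomic quiver Hecke algebra. -/
noncomputable def DpsiGen (R : Type*) [CommRing R] (t : Rˣ) (n e ℓ : ℕ) [NeZero e]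
    (κ : ℕ → ℤ) (r : Fin (n - 1)) : DefKLR R t n e ℓ κ :=
  RingQuot.mkAlgHom R (DefKLRRel R t n e ℓ κ) (kPsi R r)

/-- The generator `y_k` of the deformed cyclotomic quiver Hecke algebra. -/
noncomputable def DyGen (R : Type*) [CommRing R] (t : Rˣ) (n e ℓ : ℕ) [NeZero e]
    (κ : ℕ → ℤ) (k : Fin n) : DefKLR R t n e ℓ κ :=
  RingQuot.mkAlgHom R (DefKLRRel R t n e ℓ κ) (kY R k)

/-! ## Seminormal idempotents -/

/-- The seminormal idempotent `F_T` of the semisimple cyclotomic Hecke algebra: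
`F_T = ∏_{k=1}^n ∏_{c ∈ Cont(n), [c_k(T)] ≠ [c]} (L_k - [c]) / ([c_k(T)] - [c])`. -/
noncomputable def Fidem (K : Type*) [Field K] (tK : Kˣ) (n ℓ : ℕ) (κ : ℕ → ℤ)
    (T : StdTableau ℓ n) : CycHecke K tK n ℓ κ :=
  ((List.finRange n).map (fun k =>
    (((contFinset ℓ n κ).sort (· ≤ ·)).map (fun c =>
      if qint (tK : K) (content κ T (k.1 + 1)) ≠ qint (tK : K) c then
        (Lgen K tK n ℓ κ k - algebraMap K _ (qint (tK : K) c)) *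
          algebraMap K _ ((qint (tK : K) (content κ T (k.1 + 1)) - qint (tK : K) c)⁻¹)
      else 1)).prod)).prod

/-- The residue idempotent `f_i = Σ_{T ∈ Std(i)} F_T`. -/
noncomputable def fres (K : Type*) [Field K] (tK : Kˣ) (n ℓ e : ℕ) (κ : ℕ → ℤ)
    (i : Fin n → ZMod e) : CycHecke K tK n ℓ κ :=
  ∑ᶠ T : {T : StdTableau ℓ n // resSeq e κ T = i}, Fidem K tK n ℓ κ T.1

/-- The simultaneous two-sided eigenspace `H_{S,T}` of the Jucys–Murphy elements. -/
noncomputable def eigSub (K : Type*) [Field K] (tK : Kˣ) (n ℓ : ℕ) (κ : ℕ → ℤ)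
    (S T : StdTableau ℓ n) : Submodule K (CycHecke K tK n ℓ κ) where
  carrier := {h | ∀ k : Fin n,
      Lgen K tK n ℓ κ k * h = qint (tK : K) (content κ S (k.1 + 1)) • h ∧
      h * Lgen K tK n ℓ κ k = qint (tK : K) (content κ T (k.1 + 1)) • h}
  add_mem' := by
    intro a b ha hb
    intro k
    obtain ⟨h1, h2⟩ := ha k
    obtain ⟨h3, h4⟩ := hb k
    exact ⟨by rw [mul_add, h1, h3, smul_add], by rw [add_mul, h2, h4, smul_add]⟩
  zero_mem' := by intro k; simp
  smul_mem' := by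
    intro c a ha
    intro k
    obtain ⟨h1, h2⟩ := ha k
    constructor
    · rw [mul_smul_comm, h1, smul_comm]
    · rw [smul_mul_assoc, h2, smul_comm]

end Paper

namespace Paper

section QI
variable {K : Type*} [Field K]

lemma qint_zero (x : K) : qint x 0 = 0 := by simp [qint]

lemma qint_one (x : K) : qint x 1 = 1 := by simp [qint]

lemma qint_succ {x : K} (hx : x ≠ 0) (d : ℤ) : qint x (d + 1) = x * qint x d + 1 := by
  rcases le_or_gt 0 d with h | h
  · lift d to ℕ using h
    have h1 : (0 : ℤ) ≤ (d : ℤ) + 1 := by omega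
    have h2 : ((d : ℤ) + 1).toNat = d + 1 := by omega
    rw [qint, qint, if_pos h1, if_pos (by omega), h2, Finset.sum_range_succ']
    simp [Finset.mul_sum, pow_succ']
  · obtain ⟨m, rfl⟩ : ∃ m : ℕ, d = -((m : ℤ) + 1) := ⟨(-d - 1).toNat, by omega⟩
    rcases m with _ | m
    · simp [qint, hx]
    · have h2 : (-(-(((m + 1 : ℕ) : ℤ) + 1) + 1)).toNat = m + 1 := by omega
      have h3 : (-(-(((m + 1 : ℕ) : ℤ) + 1))).toNat = m + 1 + 1 := by omega
      rw [qint, qint, if_neg (by omega), if_neg (by omega), h2, h3, Finset.sum_range_succ' _ (m + 1)]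
      have key : ∀ k : ℕ, x * x ^ (-(((k + 1 : ℕ) : ℤ) + 1)) = x ^ (-((k : ℤ) + 1)) := by
        intro k
        rw [← zpow_one_add₀ hx]
        congr 1
      rw [mul_neg, mul_add, Finset.mul_sum, Finset.sum_congr rfl (fun k _ => key k)]
      have : x * x ^ (-(((0 : ℕ) : ℤ) + 1)) = 1 := by
        simp [hx]
      rw [this]
      ring

lemma qint_add {x : K} (hx : x ≠ 0) (a m : ℤ) :
    qint x (a + m) = qint x a + x ^ a * qint x m := by
  induction m using Int.induction_on with
  | zero => simp [qint_zero]
  | succ k ih =>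
    rw [← add_assoc, qint_succ hx, ih, qint_succ hx (k : ℤ)]
    have h := qint_succ hx a
    have h2 : qint x a * (x - 1) + 1 = x ^ a := by
      clear ih h
      induction a using Int.induction_on with
      | zero => simp [qint_zero]
      | succ k ih => rw [qint_succ hx, zpow_add_one₀ hx, ← ih]; ring
      | pred k ih =>
        have := qint_succ hx (-(k : ℤ) - 1)
        rw [sub_add_cancel] at this
        rw [zpow_sub_one₀ hx, ← ih, this]
        field_simp
        ring
    rw [← h2]
    ring
  | pred k ih =>
    have h2 : qint x a * (x - 1) + 1 = x ^ a := by
      clear ih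
      induction a using Int.induction_on with
      | zero => simp [qint_zero]
      | succ k ih => rw [qint_succ hx, zpow_add_one₀ hx, ← ih]; ring
      | pred k ih =>
        have := qint_succ hx (-(k : ℤ) - 1)
        rw [sub_add_cancel] at this
        rw [zpow_sub_one₀ hx, ← ih, this]
        field_simp
        ring
    have h3 := qint_succ hx (a + (-(k : ℤ) - 1))
    have h4 := qint_succ hx (-(k : ℤ) - 1)
    rw [sub_add_cancel] at h4
    rw [show a + (-(k : ℤ) - 1) + 1 = a + -(k : ℤ) by ring, ih, h4] at h3
    apply mul_left_cancel₀ hx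
    rw [← h2] at h3 ⊢
    linear_combination -h3

lemma qint_pow {x : K} (hx : x ≠ 0) (a : ℤ) : (x - 1) * qint x a + 1 = x ^ a := by
  have h1 := qint_add hx a 1
  have h2 := qint_succ hx a
  rw [qint_one] at h1
  linear_combination h1 - h2

lemma qint_eq_iff {x : K} (hx : x ≠ 0) (a b : ℤ) : qint x a = qint x b ↔ qint x (a - b) = 0 := by
  have h := qint_add hx b (a - b)
  rw [add_sub_cancel] at h
  rw [h]
  have : x ^ b ≠ 0 := zpow_ne_zero _ hx
  simp [this]

lemma qint_neg_eq_zero {x : K} (hx : x ≠ 0) {a : ℤ} (h : qint x (-a) = 0) : qint x a = 0 := by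
  have := (qint_eq_iff hx 0 a).1
  have h2 := (qint_eq_iff hx 0 a).2 (by simpa using h)
  rw [← h2, qint_zero]

/-- Field version of the separation condition, in convenient form. -/
structure Sep (x : K) (n ℓ : ℕ) (κ : ℕ → ℤ) : Prop where
  ne : x ≠ 0
  fac : ∀ d : ℤ, 0 < d → d ≤ n → qint x d ≠ 0
  ch : ∀ l m : ℕ, l < m → m < ℓ → ∀ d : ℤ, -(n : ℤ) < d → d < n → qint x (κ l - κ m + d) ≠ 0

lemma Sep.fac' {x : K} {n ℓ : ℕ} {κ : ℕ → ℤ} (h : Sep x n ℓ κ) (d : ℤ) (h0 : d ≠ 0)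
    (h1 : |d| ≤ n) : qint x d ≠ 0 := by
  rw [abs_le] at h1
  rcases lt_or_gt_of_ne h0 with h2 | h2
  · intro hd
    refine h.fac (-d) (by omega) (by omega) (qint_neg_eq_zero h.ne (by simpa using hd))
  · exact h.fac d h2 h1.2

lemma Sep.ch' {x : K} {n ℓ : ℕ} {κ : ℕ → ℤ} (h : Sep x n ℓ κ) (l m : ℕ) (hlm : l ≠ m)
    (hl : l < ℓ) (hm : m < ℓ) (d : ℤ) (h1 : |d| < n) : qint x (κ l - κ m + d) ≠ 0 := by
  rw [abs_lt] at h1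
  rcases lt_or_gt_of_ne hlm with h2 | h2
  · exact h.ch l m h2 hm d h1.1 h1.2
  · intro hd
    refine h.ch m l h2 hl (-d) (by omega) (by omega) (qint_neg_eq_zero h.ne ?_)
    rw [← hd]
    congr 1
    ring
end QI

/-! Combinatorics of diagrams and paths -/

/-- The content of a node. -/
def ncont (κ : ℕ → ℤ) (A : Node) : ℤ := κ A.1 + (A.2.2 : ℤ) - (A.2.1 : ℤ)

/-- Downward closed finite sets of nodes. -/
def DC (ℓ : ℕ) (S : Finset Node) : Prop :=
  ∀ l r c, (l, r, c) ∈ S → l < ℓ ∧ ∀ r' c', r' ≤ r → c' ≤ c → (l, r', c') ∈ S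

/-- Addable nodes. -/
def Ad (ℓ : ℕ) (S : Finset Node) (A : Node) : Prop := A ∉ S ∧ DC ℓ (insert A S)

/-- The set of the first `k` nodes of a path. -/
def lam (N : ℕ → Node) (k : ℕ) : Finset Node := (Finset.range k).image N

/-- Paths (standard tableaux as sequences of nodes). -/
def Path (ℓ k : ℕ) (N : ℕ → Node) : Prop := ∀ j < k, Ad ℓ (lam N j) (N j)

lemma lam_succ (N : ℕ → Node) (k : ℕ) : lam N (k + 1) = insert (N k) (lam N k) := by
  simp [lam, Finset.range_add_one]

lemma lam_congr {N N' : ℕ → Node} {k : ℕ} (h : ∀ j < k, N j = N' j) : lam N k = lam N' k := by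
  apply Finset.image_congr
  intro j hj
  exact h j (by simpa using hj)

lemma Path.dc {ℓ k : ℕ} {N : ℕ → Node} (h : Path ℓ k N) : DC ℓ (lam N k) := by
  rcases k with _ | k
  · intro l r c hh
    simp [lam] at hh
  · rw [lam_succ]
    exact (h k (by omega)).2

lemma Path.mono {ℓ k j : ℕ} {N : ℕ → Node} (h : Path ℓ k N) (hj : j ≤ k) : Path ℓ j N :=
  fun i hi => h i (by omega)

lemma Path.card {ℓ k : ℕ} {N : ℕ → Node} (h : Path ℓ k N) : (lam N k).card = k := by
  induction k with
  | zero => simp [lam]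
  | succ k ih =>
    rw [lam_succ, Finset.card_insert_of_notMem (h k (by omega)).1, ih (h.mono (by omega))]

lemma Ad.below {ℓ : ℕ} {S : Finset Node} {l r c : ℕ} (h : Ad ℓ S (l, r, c)) :
    l < ℓ ∧ ∀ r' c', r' ≤ r → c' ≤ c → (r', c') ≠ (r, c) → (l, r', c') ∈ S := by
  have h1 := h.2 l r c (by simp)
  refine ⟨h1.1, fun r' c' hr hc hne => ?_⟩
  have h2 := h1.2 r' c' hr hc
  rw [Finset.mem_insert] at h2
  rcases h2 with h2 | h2
  · simp at h2
    simp [h2] at hne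
  · exact h2

/-- nodes of `S` in component `l` -/
def comp (S : Finset Node) (l : ℕ) : Finset Node := S.filter (fun A => A.1 = l)

lemma comp_card {S : Finset Node} {l m : ℕ} (h : l ≠ m) :
    (comp S l).card + (comp S m).card ≤ S.card := by
  rw [← Finset.card_union_of_disjoint]
  · apply Finset.card_le_card
    intro A hA
    simp [comp] at hA
    tauto
  · rw [Finset.disjoint_left]
    intro A h1 h2
    simp [comp] at h1 h2
    omega

lemma Ad.col_le {ℓ : ℕ} {S : Finset Node} {l r c : ℕ} (h : Ad ℓ S (l, r, c)) :
    c ≤ (comp S l).card := by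
  have : ((Finset.range c).image (fun c' => (l, r, c'))) ⊆ comp S l := by
    intro A hA
    simp only [Finset.mem_image, Finset.mem_range] at hA
    obtain ⟨c', hc', rfl⟩ := hA
    simp only [comp, Finset.mem_filter, and_true]
    refine h.below.2 _ _ le_rfl (by omega) (by simp; omega)
  have h2 := Finset.card_le_card this
  rwa [Finset.card_image_of_injective _ (fun a b hab => by simpa using hab),
    Finset.card_range] at h2

lemma Ad.row_le {ℓ : ℕ} {S : Finset Node} {l r c : ℕ} (h : Ad ℓ S (l, r, c)) :
    r ≤ (comp S l).card := by
  have : ((Finset.range r).image (fun r' => (l, r', c))) ⊆ comp S l := by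
    intro A hA
    simp only [Finset.mem_image, Finset.mem_range] at hA
    obtain ⟨c', hc', rfl⟩ := hA
    simp only [comp, Finset.mem_filter, and_true]
    refine h.below.2 _ _ (by omega) le_rfl (by simp; omega)
  have h2 := Finset.card_le_card this
  rwa [Finset.card_image_of_injective _ (fun a b hab => by simpa using hab),
    Finset.card_range] at h2

lemma Ad.hook {ℓ : ℕ} {S : Finset Node} {l r c r' c' : ℕ} (h : Ad ℓ S (l, r, c))
    (h' : Ad ℓ S (l, r', c')) (hr : r < r') : c + r' ≤ S.card + 1 := by
  have h1 : ((Finset.range c).image (fun x => (l, r, x))) ∪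
      (((Finset.range r').erase r).image (fun x => (l, x, c'))) ⊆ S := by
    intro A hA
    simp only [Finset.mem_union, Finset.mem_image, Finset.mem_range, Finset.mem_erase] at hA
    rcases hA with ⟨x, hx, rfl⟩ | ⟨x, hx, rfl⟩
    · exact h.below.2 _ _ le_rfl (by omega) (by simp; omega)
    · exact h'.below.2 _ _ (by omega) le_rfl (by simp; omega)
  have h2 := Finset.card_le_card h1
  rw [Finset.card_union_of_disjoint, Finset.card_image_of_injective _ (fun a b hab => by simpa using hab),
    Finset.card_image_of_injective _ (fun a b hab => by simpa using hab), Finset.card_range,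
    Finset.card_erase_of_mem (by simpa using hr), Finset.card_range] at h2
  · omega
  · rw [Finset.disjoint_left]
    intro A h1 h2
    simp only [Finset.mem_image, Finset.mem_range, Finset.mem_erase] at h1 h2
    obtain ⟨x, hx, rfl⟩ := h1
    obtain ⟨y, hy, hxy⟩ := h2
    simp at hxy
    omega

lemma Ad.order {ℓ : ℕ} {S : Finset Node} {l r c r' c' : ℕ} (h : Ad ℓ S (l, r, c))
    (h' : Ad ℓ S (l, r', c')) (hne : (r, c) ≠ (r', c')) : (r < r' ∧ c' < c) ∨ (r' < r ∧ c < c') := by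
  have h1 : ¬ (r ≤ r' ∧ c ≤ c') := fun hh => h.1 (h'.below.2 _ _ hh.1 hh.2 hne)
  have h2 : ¬ (r' ≤ r ∧ c' ≤ c) := fun hh => h'.1 (h.below.2 _ _ hh.1 hh.2 hne.symm)
  omega

lemma sep_core {ℓ : ℕ} {S : Finset Node} {κ : ℕ → ℤ} {A B : Node} (hA : Ad ℓ S A) (hB : Ad ℓ S B)
    (hne : A ≠ B) :
    (2 ≤ |ncont κ A - ncont κ B| ∧ |ncont κ A - ncont κ B| ≤ S.card + 1) ∨
    (A.1 < ℓ ∧ B.1 < ℓ ∧ A.1 ≠ B.1 ∧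
      ∃ d : ℤ, |d| ≤ S.card ∧ ncont κ A - ncont κ B = κ A.1 - κ B.1 + d) := by
  obtain ⟨l, r, c⟩ := A
  obtain ⟨m, r', c'⟩ := B
  simp only [ncont]
  by_cases hlm : l = m
  · subst hlm
    left
    have hne' : (r, c) ≠ (r', c') := by simpa using hne
    rcases hA.order hB hne' with h | h
    · have := hA.hook hB h.1
      rw [abs_of_nonneg (by omega)]
      omega
    · have := hB.hook hA h.1
      rw [abs_of_nonpos (by omega)]
      omega
  · right
    refine ⟨hA.below.1, hB.below.1, hlm, (c : ℤ) - r - (c' - r'), ?_, by ring⟩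
    have h1 := hA.row_le
    have h2 := hA.col_le
    have h3 := hB.row_le
    have h4 := hB.col_le
    have h5 := comp_card (S := S) hlm
    rw [abs_le]
    omega

variable {K : Type*} [Field K]

lemma sep_eq {n ℓ : ℕ} {κ : ℕ → ℤ} {x : K} (hs : Sep x n ℓ κ) {S : Finset Node} {A B : Node}
    (hA : Ad ℓ S A) (hB : Ad ℓ S B) (hS : S.card + 1 ≤ n)
    (h : qint x (ncont κ A) = qint x (ncont κ B)) : A = B := by
  by_contra hne
  rw [qint_eq_iff hs.ne] at h
  rcases sep_core (κ := κ) hA hB hne with ⟨h1, h2⟩ | ⟨h1, h2, h3, d, hd, h4⟩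
  · refine hs.fac' _ (fun h0 => ?_) (by omega) h
    rw [h0] at h1
    simp at h1
  · rw [h4] at h
    exact hs.ch' _ _ h3 h1 h2 d (by omega) h

lemma sep_succ {n ℓ : ℕ} {κ : ℕ → ℤ} {x : K} (hs : Sep x n ℓ κ) {S : Finset Node} {A B : Node}
    (hA : Ad ℓ S A) (hB : Ad ℓ S B) (hS : S.card + 2 ≤ n) (ε : ℤ) (hε : ε = 1 ∨ ε = -1) :
    qint x (ncont κ A) ≠ qint x (ncont κ B + ε) := by
  intro h
  rw [qint_eq_iff hs.ne] at h
  have he : |ε| = 1 := by rcases hε with rfl | rfl <;> simp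
  by_cases hne : A = B
  · subst hne
    refine hs.fac' _ (fun h0 => ?_) ?_ h
    · rw [sub_add_cancel_left] at h0
      rw [neg_eq_zero] at h0
      simp [h0] at he
    · rw [sub_add_cancel_left, abs_neg]
      omega
  rw [← sub_sub] at h
  rcases sep_core (κ := κ) hA hB hne with ⟨h1, h2⟩ | ⟨h1, h2, h3, d, hd, h4⟩
  · refine hs.fac' _ (fun h0 => ?_) ?_ h
    · rw [sub_eq_zero] at h0
      rw [h0] at h1
      omega
    · have := abs_sub (ncont κ A - ncont κ B) ε
      omega
  · rw [h4, add_sub_assoc] at h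
    have := abs_sub d ε
    exact hs.ch' _ _ h3 h1 h2 (d - ε) (by omega) h

end Paper

namespace Paper

open Polynomial

set_option linter.unusedSimpArgs false

section Alg
variable {K : Type*} [Field K] {H : Type*} [Ring H] [Algebra K H]

/-- The relations of the Hecke algebra, in convenient form, with generators indexed by `ℕ`. -/
structure HD (n ℓ : ℕ) (κ : ℕ → ℤ) (t : K) (L T : ℕ → H) : Prop where
  cyc : 0 < n → aeval (L 0) (∏ l ∈ Finset.range ℓ, (X - C (qint t (κ l)))) = 0
  quad : ∀ r, r + 1 < n → T r * T r = (t - 1) • T r + t • (1 : H)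
  LL : ∀ i j, i < n → j < n → L i * L j = L j * L i
  braid : ∀ r, r + 2 < n → T r * T (r + 1) * T r = T (r + 1) * T r * T (r + 1)
  TL : ∀ r k, r + 1 < n → k < n → k ≠ r → k ≠ r + 1 → L k * T r = T r * L k
  LT : ∀ r, r + 1 < n → L (r + 1) * T r = T r * L r + 1 + (t - 1) • L (r + 1)
  LT2 : ∀ r, r + 1 < n → L r * T r = T r * L (r + 1) - 1 - (t - 1) • L (r + 1)

lemma LT2_of {t : K} (ht : t ≠ 0) {a b s : H} (hq : s * s = (t - 1) • s + t • (1 : H))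
    (h : b * s = s * a + 1 + (t - 1) • b) : a * s = s * b - 1 - (t - 1) • b := by
  have h1 : t • b = s * a * s + s := by
    have h2 : b * s * s = b * ((t - 1) • s + t • (1 : H)) := by rw [mul_assoc, hq]
    rw [h] at h2
    simp only [add_mul, mul_add, mul_smul_comm, smul_mul_assoc, h, mul_one, one_mul] at h2
    rw [← sub_eq_zero] at h2 ⊢
    rw [← neg_eq_zero, ← h2]
    module
  have h3 : t • (a * s) = t • (s * b - 1 - (t - 1) • b) := by
    have h4 : s * (t • b) = s * (s * a * s + s) := by rw [h1]
    have h5 : s * (s * a * s + s) = (t - 1) • (t • b) + t • (a * s) + t • (1 : H) := by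
      rw [h1]
      have : s * (s * a * s + s) = (s * s) * (a * s) + s * s := by noncomm_ring
      rw [this, hq]
      simp only [add_mul, smul_mul_assoc, one_mul, mul_assoc]
      module
    rw [h5, mul_smul_comm] at h4
    rw [smul_sub, smul_sub, h4]
    module
  exact smul_right_injective H ht h3

/-- intertwiner -/
def Phi (t : K) (L T : ℕ → H) (r : ℕ) : H := T r * (L r - L (r + 1)) + (t - 1) • L (r + 1) + 1

variable {n ℓ : ℕ} {κ : ℕ → ℤ} {t : K} {L T : ℕ → H}

lemma reassoc {a b c : H} (h : a * b = c) (z : H) : a * (b * z) = c * z := by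
  rw [← mul_assoc, h]

lemma HD.phi1 (hd : HD n ℓ κ t L T) {r : ℕ} (hr : r + 1 < n) :
    L (r + 1) * Phi t L T r = Phi t L T r * L r := by
  have hq := hd.quad r hr
  have h1 := hd.LT r hr
  have h3 := hd.LL (r + 1) r (by omega) (by omega)
  simp only [Phi, mul_add, add_mul, mul_sub, sub_mul, smul_mul_assoc, mul_smul_comm, mul_assoc,
    h1, h3, reassoc h1, reassoc h3, mul_one, one_mul, smul_add, smul_sub]
  module

lemma HD.phi2 (hd : HD n ℓ κ t L T) {r : ℕ} (hr : r + 1 < n) :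
    L r * Phi t L T r = Phi t L T r * L (r + 1) := by
  have hq := hd.quad r hr
  have h1 := hd.LT2 r hr
  have h3 := hd.LL (r + 1) r (by omega) (by omega)
  simp only [Phi, mul_add, add_mul, mul_sub, sub_mul, smul_mul_assoc, mul_smul_comm, mul_assoc,
    h1, h3, reassoc h1, reassoc h3, mul_one, one_mul, smul_add, smul_sub]
  module

lemma HD.phi3 (hd : HD n ℓ κ t L T) {r : ℕ} (hr : r + 1 < n) :
    Phi t L T r * Phi t L T r =
      - ((L (r + 1) - t • L r - 1) * (t • L (r + 1) + 1 - L r)) := by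
  have hq := hd.quad r hr
  have h1 := hd.LT r hr
  have h2 := hd.LT2 r hr
  have h3 := hd.LL (r + 1) r (by omega) (by omega)
  simp only [Phi, mul_add, add_mul, mul_sub, sub_mul, smul_mul_assoc, mul_smul_comm, mul_assoc,
    h1, h2, h3, hq, reassoc h1, reassoc h2, reassoc h3, reassoc hq, mul_one, one_mul,
    smul_add, smul_sub]
  module

lemma aeval_semi {x y z : H} (h : x * z = z * y) (p : K[X]) :
    aeval x p * z = z * aeval y p := by
  induction p using Polynomial.induction_on' with
  | add p q hp hq => rw [map_add, map_add, add_mul, mul_add, hp, hq]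
  | monomial k a =>
    rw [aeval_monomial, aeval_monomial, mul_assoc, Algebra.commutes, mul_assoc]
    have : x ^ k * z = z * y ^ k := by
      have := (show SemiconjBy z y x from h.symm).pow_right k
      exact this.eq.symm
    rw [← mul_assoc, this, mul_assoc, Algebra.commutes]

lemma aeval_eig {x u : H} {β : K} (h : x * u = β • u) (p : K[X]) :
    aeval x p * u = p.eval β • u := by
  induction p using Polynomial.induction_on' with
  | add p q hp hq => rw [map_add, add_mul, hp, hq, eval_add, add_smul]
  | monomial k a =>
    rw [aeval_monomial, eval_monomial, mul_assoc]
    have : x ^ k * u = β ^ k • u := by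
      induction k with
      | zero => simp
      | succ k ih => rw [pow_succ, mul_assoc, h, mul_smul_comm, ih, smul_smul, pow_succ, mul_comm]
    rw [this, ← Algebra.smul_def, smul_smul]

lemma aeval_stab {x : H} {V : Submodule K H} (hV : ∀ v ∈ V, x * v ∈ V) (p : K[X]) :
    ∀ v ∈ V, aeval x p * v ∈ V := by
  intro v hv
  induction p using Polynomial.induction_on' with
  | add p q hp hq => rw [map_add, add_mul]; exact V.add_mem hp hq
  | monomial k a =>
    rw [aeval_monomial, mul_assoc, ← Algebra.smul_def]
    apply V.smul_mem
    induction k with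
    | zero => simpa
    | succ k ih => rw [pow_succ', mul_assoc]; exact hV _ ih

lemma lagr {x : H} {V W : Submodule K H} (hV : ∀ v ∈ V, x * v ∈ V) (S : Finset K)
    (hW : ∀ β ∈ S, ∀ u ∈ V, x * u = β • u → u ∈ W) :
    ∀ v ∈ V, aeval x (∏ β ∈ S, (X - C β)) * v = 0 → v ∈ W := by
  induction S using Finset.induction_on with
  | empty => intro v _ h; simp at h; simp [h]
  | insert b S hb ih =>
    intro v hv h
    rw [Finset.prod_insert hb] at h
    set p : K[X] := ∏ β ∈ S, (X - C β) with hp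
    have hu : x * (aeval x p * v) = b • (aeval x p * v) := by
      rw [map_mul, mul_assoc, map_sub, aeval_X, aeval_C, sub_mul, ← Algebra.smul_def,
        sub_eq_zero] at h
      exact h
    have huV := aeval_stab hV p v hv
    have huW := hW b (by simp) _ huV hu
    have hc : p.eval b ≠ 0 := by
      rw [hp, eval_prod, Finset.prod_ne_zero_iff]
      intro c hc
      simp only [eval_sub, eval_X, eval_C, ne_eq, sub_eq_zero]
      rintro rfl
      exact hb hc
    have h2 : v - (p.eval b)⁻¹ • (aeval x p * v) ∈ W := by
      apply ih (fun β hβ => hW β (by simp [hβ]))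
      · exact V.sub_mem hv (V.smul_mem _ huV)
      · rw [mul_sub, mul_smul_comm, aeval_eig hu p, smul_smul, inv_mul_cancel₀ hc, one_smul,
          sub_self]
    have := W.add_mem h2 (W.smul_mem (p.eval b)⁻¹ huW)
    simpa using this

/-- joint eigenspaces of the first `k` Jucys–Murphy elements -/
def Eg (κ : ℕ → ℤ) (t : K) (L : ℕ → H) (k : ℕ) (N : ℕ → Node) : Submodule K H where
  carrier := {v | ∀ j < k, L j * v = qint t (ncont κ (N j)) • v}
  add_mem' := by
    intro a b ha hb j hj
    rw [mul_add, ha j hj, hb j hj, smul_add]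
  zero_mem' := by intro j _; simp
  smul_mem' := by
    intro c a ha j hj
    rw [mul_smul_comm, ha j hj, smul_comm]

lemma Eg.mul_mem {k : ℕ} {N : ℕ → Node} {v z : H} (hv : v ∈ Eg κ t L k N)
    (hz : ∀ j < k, L j * z = z * L j) : z * v ∈ Eg κ t L k N := by
  intro j hj
  rw [← mul_assoc, hz j hj, mul_assoc, hv j hj, mul_smul_comm]

lemma Eg.mono {k j : ℕ} {N : ℕ → Node} {v : H} (hv : v ∈ Eg κ t L k N) (h : j ≤ k) :
    v ∈ Eg κ t L j N := fun i hi => hv i (by omega)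

lemma Eg.congr {k : ℕ} {N N' : ℕ → Node} {v : H} (hv : v ∈ Eg κ t L k N)
    (h : ∀ j < k, N j = N' j) : v ∈ Eg κ t L k N' := by
  intro i hi
  rw [← h i hi]
  exact hv i hi

/-- `L_{k}` acts on the eigenspace of `N` semisimply through contents of addable nodes. -/
def CC (ℓ : ℕ) (κ : ℕ → ℤ) (t : K) (L : ℕ → H) (k : ℕ) (N : ℕ → Node) : Prop :=
  ∃ S : Finset K, (∀ β ∈ S, ∃ b, Ad ℓ (lam N k) b ∧ β = qint t (ncont κ b)) ∧
    ∀ v ∈ Eg κ t L k N, aeval (L k) (∏ β ∈ S, (X - C β)) * v = 0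

lemma CC.ex {k : ℕ} {N : ℕ → Node} (h : CC ℓ κ t L k N) {w : H} (hw : w ∈ Eg κ t L k N)
    (h0 : w ≠ 0) {x : K} (hx : L k * w = x • w) :
    ∃ b, Ad ℓ (lam N k) b ∧ x = qint t (ncont κ b) := by
  obtain ⟨S, hS, hk⟩ := h
  have h1 := hk w hw
  rw [aeval_eig hx, smul_eq_zero, or_iff_left h0, eval_prod, Finset.prod_eq_zero_iff] at h1
  obtain ⟨β, hβ, h2⟩ := h1
  simp only [eval_sub, eval_X, eval_C, sub_eq_zero] at h2
  subst h2
  exact hS _ hβ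

lemma noDouble (hs : Sep t n ℓ κ) (hd : HD n ℓ κ t L T) {k : ℕ} (hk : k + 1 < n) {N : ℕ → Node}
    (h : CC ℓ κ t L k N) {w : H} (hw : w ∈ Eg κ t L k N) {x : K} (hx : L k * w = x • w)
    (hx' : L (k + 1) * w = x • w) : w = 0 := by
  by_contra h0
  have hX : (t - 1) * x + 1 ≠ 0 := by
    obtain ⟨b, -, rfl⟩ := h.ex hw h0 hx
    rw [qint_pow hs.ne]
    exact zpow_ne_zero _ hs.ne
  obtain ⟨S, hS, hkill⟩ := h
  have hu : T k * w ∈ Eg κ t L k N :=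
    Eg.mul_mem hw (fun j hj => hd.TL k j hk (by omega) (by omega) (by omega))
  have h1 := hkill _ hu
  have h2 := hkill _ hw
  have hxS : x ∈ S := by
    by_contra hxS
    rw [aeval_eig hx, smul_eq_zero, or_iff_left h0, eval_prod, Finset.prod_eq_zero_iff] at h2
    obtain ⟨β, hβ, h2⟩ := h2
    simp only [eval_sub, eval_X, eval_C, sub_eq_zero] at h2
    subst h2
    exact hxS hβ
  rw [← Finset.mul_prod_erase _ _ hxS, mul_comm, map_mul, mul_assoc] at h1
  have h3 : aeval (L k) (X - C x : K[X]) * (T k * w) = -(((t - 1) * x + 1) • w) := by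
    rw [map_sub, aeval_X, aeval_C, sub_mul, ← Algebra.smul_def, ← mul_assoc, hd.LT2 k hk]
    simp only [sub_mul, mul_assoc, hx', smul_mul_assoc, mul_smul_comm, one_mul]
    module
  rw [h3, mul_neg, mul_smul_comm, aeval_eig hx, neg_eq_zero, smul_eq_zero, smul_eq_zero,
    or_iff_right hX, or_iff_left h0, eval_prod, Finset.prod_eq_zero_iff] at h1
  obtain ⟨β, hβ, h1⟩ := h1
  simp only [eval_sub, eval_X, eval_C, sub_eq_zero] at h1
  simp [h1] at hβ

lemma swapv (hd : HD n ℓ κ t L T) {r : ℕ} (hr : r + 1 < n) {v : H} {x y : K}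
    (hx : L r * v = x • v) (hy : L (r + 1) * v = y • v) (hxy : x ≠ y) {γ : K}
    (hγ : γ = ((t - 1) * y + 1) / (y - x)) :
    L r * (T r * v - γ • v) = y • (T r * v - γ • v) ∧
    L (r + 1) * (T r * v - γ • v) = x • (T r * v - γ • v) ∧
    (T r * (T r * v - γ • v) - (t - 1 - γ) • (T r * v - γ • v) = ((t - γ) * (1 + γ)) • v) := by
  have hyx : y - x ≠ 0 := sub_ne_zero.2 hxy.symm
  have hg : (t - 1) * y + 1 = γ * (y - x) := by rw [hγ]; field_simp
  refine ⟨?_, ?_, ?_⟩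
  · rw [mul_sub, ← mul_assoc, hd.LT2 r hr]
    simp only [sub_mul, mul_assoc, hx, hy, smul_mul_assoc, mul_smul_comm, one_mul]
    have : ((t - 1) * y + 1) • v = (γ * (y - x)) • v := by rw [hg]
    rw [← sub_eq_zero] at this ⊢
    rw [← neg_eq_zero, ← this]
    module
  · rw [mul_sub, ← mul_assoc, hd.LT r hr]
    simp only [add_mul, mul_assoc, hx, hy, smul_mul_assoc, mul_smul_comm, one_mul]
    have : ((t - 1) * y + 1) • v = (γ * (y - x)) • v := by rw [hg]
    rw [← sub_eq_zero] at this ⊢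
    rw [← this]
    module
  · rw [mul_sub, ← mul_assoc, hd.quad r hr]
    simp only [add_mul, smul_mul_assoc, mul_smul_comm, one_mul]
    module

end Alg
end Paper

namespace Paper

open Polynomial

/-- `B ≤ X` in the same component, coordinatewise -/
def nle (B X : Node) : Prop := B.1 = X.1 ∧ B.2.1 ≤ X.2.1 ∧ B.2.2 ≤ X.2.2

lemma DC.mem_of_nle {ℓ : ℕ} {S : Finset Node} (h : DC ℓ S) {B X : Node} (hX : X ∈ S)
    (hB : nle B X) : B ∈ S := by
  obtain ⟨l, r, c⟩ := X
  obtain ⟨m, r', c'⟩ := B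
  obtain ⟨h1, h2, h3⟩ := hB
  simp only at h1 h2 h3
  subst h1
  exact (h _ _ _ hX).2 _ _ h2 h3

lemma DC.lt {ℓ : ℕ} {S : Finset Node} (h : DC ℓ S) {X : Node} (hX : X ∈ S) : X.1 < ℓ :=
  (h X.1 X.2.1 X.2.2 hX).1

lemma DC.mk' {ℓ : ℕ} {S : Finset Node} (h1 : ∀ X ∈ S, X.1 < ℓ)
    (h2 : ∀ B X, X ∈ S → nle B X → B ∈ S) : DC ℓ S := by
  intro l r c h
  exact ⟨h1 _ h, fun r' c' hr hc => h2 _ _ h ⟨rfl, hr, hc⟩⟩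

lemma lam_inj {ℓ k : ℕ} {N : ℕ → Node} (h : Path ℓ k N) {i j : ℕ} (hi : i < k) (hj : j < k)
    (hij : N i = N j) : i = j := by
  by_contra hne
  rcases lt_or_gt_of_ne hne with h1 | h1
  · exact (h j hj).1 (by rw [← hij]; simp only [lam, Finset.mem_image, Finset.mem_range]; exact ⟨i, h1, rfl⟩)
  · exact (h i hi).1 (by rw [hij]; simp only [lam, Finset.mem_image, Finset.mem_range]; exact ⟨j, h1, rfl⟩)

lemma mem_lam {N : ℕ → Node} {k : ℕ} {X : Node} : X ∈ lam N k ↔ ∃ i < k, N i = X := by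
  simp [lam]

/-- swapping `j` and `j+1` in a path -/
def swp (N : ℕ → Node) (j : ℕ) : ℕ → Node := fun i => N (Equiv.swap j (j + 1) i)

lemma swp_l (N : ℕ → Node) (j : ℕ) : swp N j j = N (j + 1) := by simp [swp]
lemma swp_r (N : ℕ → Node) (j : ℕ) : swp N j (j + 1) = N j := by simp [swp]
lemma swp_o (N : ℕ → Node) {j i : ℕ} (h1 : i ≠ j) (h2 : i ≠ j + 1) : swp N j i = N i := by
  simp [swp, Equiv.swap_apply_of_ne_of_ne h1 h2]

lemma lam_swp_ge (N : ℕ → Node) {j i : ℕ} (h : j + 2 ≤ i) : lam (swp N j) i = lam N i := by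
  induction i, h using Nat.le_induction with
  | base =>
    rw [lam_succ, lam_succ, lam_succ, lam_succ, swp_l, swp_r, Finset.insert_comm,
      lam_congr (N := swp N j) (N' := N) (fun i hi => swp_o N (by omega) (by omega))]
  | succ i hi ih => rw [lam_succ, lam_succ, ih, swp_o N (by omega) (by omega)]

lemma Path.adC {ℓ k : ℕ} {N : ℕ → Node} (h : Path ℓ k N) {j : ℕ} (hj : j + 1 < k)
    (hm : ¬ nle (N j) (N (j + 1))) : Ad ℓ (lam N j) (N (j + 1)) := by
  have h1 := h (j + 1) hj
  have h0 := h j (by omega)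
  refine ⟨fun hh => h1.1 (by rw [lam_succ]; exact Finset.mem_insert_of_mem hh), ?_⟩
  have hdc := (h.mono (show j ≤ k by omega)).dc
  apply DC.mk'
  · intro X hX
    rw [Finset.mem_insert] at hX
    rcases hX with rfl | hX
    · exact h1.2.lt (by simp)
    · exact hdc.lt hX
  · intro B X hX hB
    rw [Finset.mem_insert] at hX
    rcases hX with rfl | hX
    · have h2 := h1.2.mem_of_nle (by simp) hB
      rw [lam_succ, Finset.mem_insert, Finset.mem_insert] at h2
      rw [Finset.mem_insert]
      rcases h2 with h2 | h2 | h2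
      · exact Or.inl h2
      · rw [h2] at hB
        exact absurd hB hm
      · exact Or.inr h2
    · exact Finset.mem_insert_of_mem (hdc.mem_of_nle hX hB)

lemma Path.swp {ℓ k : ℕ} {N : ℕ → Node} (h : Path ℓ k N) {j : ℕ} (hj : j + 1 < k)
    (hm : ¬ nle (N j) (N (j + 1))) : Path ℓ k (swp N j) := by
  intro i hi
  rcases lt_trichotomy i j with h1 | h1 | h1
  · rw [swp_o N (by omega) (by omega),
      lam_congr (N := Paper.swp N j) (N' := N) (fun i hi => swp_o N (by omega) (by omega))]
    exact h i hi
  · subst h1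
    rw [swp_l, lam_congr (N := Paper.swp N i) (N' := N) (fun i hi => swp_o N (by omega) (by omega))]
    exact h.adC hj hm
  · rcases Nat.lt_or_ge (j + 1) i with h2 | h2
    · rw [swp_o N (by omega) (by omega), lam_swp_ge N (by omega)]
      exact h i hi
    · obtain rfl : i = j + 1 := by omega
      rw [swp_r, lam_succ, swp_l, lam_congr (N := Paper.swp N j) (N' := N) (fun i hi => swp_o N (by omega) (by omega))]
      refine ⟨?_, ?_⟩
      · rw [Finset.mem_insert, not_or]
        refine ⟨fun hh => ?_, (h j (by omega)).1⟩
        have := lam_inj h (by omega) hj hh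
        omega
      · rw [Finset.insert_comm, ← lam_succ]
        exact (h (j + 1) hj).2

section Alg
variable {K : Type*} [Field K] {H : Type*} [Ring H] [Algebra K H]
variable {n ℓ : ℕ} {κ : ℕ → ℤ} {t : K} {L T : ℕ → H}

lemma elim_base (hs : Sep t n ℓ κ) (hd : HD n ℓ κ t L T) {j : ℕ} (hk : j + 2 < n)
    {N : ℕ → Node} (hN : Path ℓ (j + 2) N) (hC : CC ℓ κ t L j N) {ε : ℤ} (hε : ε = 1 ∨ ε = -1)
    (hc : ncont κ (N j) = ncont κ (N (j + 1)) + ε) {v : H} (hv : v ∈ Eg κ t L (j + 2) N)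
    (hv2 : L (j + 2) * v = qint t (ncont κ (N (j + 1)) + ε) • v) : v = 0 := by
  by_contra h0
  set a := ncont κ (N (j + 1)) with ha
  have hvj : L j * v = qint t (a + ε) • v := by rw [← hc]; exact hv j (by omega)
  have hvj1 : L (j + 1) * v = qint t a • v := hv (j + 1) (by omega)
  have hcard := (hN.mono (show j ≤ j + 2 by omega)).card
  have hne : qint t (a + ε) ≠ qint t a := by
    intro hh
    rw [qint_eq_iff hs.ne, add_sub_cancel_left] at hh
    refine hs.fac' ε (by rcases hε with rfl | rfl <;> simp) ?_ hh
    rcases hε with rfl | rfl <;> simp <;> omega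
  -- the first swap vanishes
  obtain ⟨h1a, h1b, -⟩ := swapv hd (by omega) hvj hvj1 hne rfl
  have w1 := fun hne0 => hC.ex (w := T j * v - (((t - 1) * qint t a + 1) / (qint t a - qint t (a + ε))) • v)
    (by
      refine Submodule.sub_mem _ (Eg.mul_mem (Eg.mono hv (by omega)) ?_)
        (Submodule.smul_mem _ _ (Eg.mono hv (by omega)))
      intro i hi
      exact hd.TL j i (by omega) (by omega) (by omega) (by omega)) hne0 h1a
  have hw1 : T j * v - (((t - 1) * qint t a + 1) / (qint t a - qint t (a + ε))) • v = 0 := by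
    by_contra hne0
    obtain ⟨b, hb, hb2⟩ := w1 hne0
    refine sep_succ hs hb (hN j (by omega)) (by omega) (-ε) (by omega) ?_ (κ := κ)
    rw [← hb2, hc]
    simp
  obtain ⟨h2a, h2b, -⟩ := swapv hd (show j + 1 + 1 < n by omega) hvj1 hv2 hne.symm rfl
  have hw2 : T (j + 1) * v - (((t - 1) * qint t (a + ε) + 1) / (qint t (a + ε) - qint t a)) • v = 0 := by
    have hmem : T (j + 1) * v - (((t - 1) * qint t (a + ε) + 1) / (qint t (a + ε) - qint t a)) • v
        ∈ Eg κ t L (j + 1) N := by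
      refine Submodule.sub_mem _ (Eg.mul_mem (Eg.mono hv (by omega)) ?_)
        (Submodule.smul_mem _ _ (Eg.mono hv (by omega)))
      intro i hi
      exact hd.TL (j + 1) i (by omega) (by omega) (by omega) (by omega)
    refine noDouble hs hd (k := j) (by omega) hC (Eg.mono hmem (by omega)) (x := qint t (a + ε)) ?_ h2a
    have := hmem j (by omega)
    rwa [hc] at this
  rw [sub_eq_zero] at hw1 hw2
  set γ1 := (((t - 1) * qint t a + 1) / (qint t a - qint t (a + ε))) with hγ1
  set γ2 := (((t - 1) * qint t (a + ε) + 1) / (qint t (a + ε) - qint t a)) with hγ2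
  have hb := congrArg (· * v) (hd.braid j hk)
  simp only [mul_assoc, hw1, hw2, mul_smul_comm, smul_smul] at hb
  rw [← sub_eq_zero, ← sub_smul, smul_eq_zero, or_iff_left h0] at hb
  have hsub : qint t (a + ε) - qint t a ≠ 0 := sub_ne_zero.2 hne
  have hp := qint_pow hs.ne a
  have hp2 := qint_pow hs.ne (a + ε)
  have e1 : γ1 ≠ 0 := by
    rw [hγ1, hp]
    exact div_ne_zero (zpow_ne_zero _ hs.ne) (sub_ne_zero.2 hne.symm)
  have e2 : γ2 ≠ 0 := by
    rw [hγ2, hp2]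
    exact div_ne_zero (zpow_ne_zero _ hs.ne) hsub
  have e3 : γ1 = γ2 := by
    have : γ1 * γ2 * (γ1 - γ2) = 0 := by linear_combination hb
    simpa [e1, e2, sub_eq_zero] using this
  have h4 : ((t - 1) * qint t a + 1) + ((t - 1) * qint t (a + ε) + 1) = 0 := by
    have g1 : γ1 * (qint t a - qint t (a + ε)) = (t - 1) * qint t a + 1 :=
      div_mul_cancel₀ _ (sub_ne_zero.2 hne.symm)
    have g2 : γ2 * (qint t (a + ε) - qint t a) = (t - 1) * qint t (a + ε) + 1 :=
      div_mul_cancel₀ _ hsub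
    rw [← g1, ← g2, e3]
    ring
  rw [hp, hp2] at h4
  have h5 : t + 1 = 0 := by
    rcases hε with rfl | rfl
    · rw [zpow_add_one₀ hs.ne] at h4
      have : t ^ a * (t + 1) = 0 := by linear_combination h4
      simpa [zpow_ne_zero _ hs.ne] using this
    · rw [← sub_eq_add_neg, zpow_sub_one₀ hs.ne] at h4
      have : t ^ a * t⁻¹ * (t + 1) = 0 := by
        have := mul_inv_cancel₀ hs.ne
        linear_combination h4 + t ^ a * this
      simpa [zpow_ne_zero _ hs.ne, hs.ne] using this
  apply hs.fac 2 (by omega) (by omega)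
  rw [show (2 : ℤ) = 1 + 1 by norm_num, qint_succ hs.ne, qint_one, mul_one, h5]

lemma elim_step (hs : Sep t n ℓ κ) (hd : HD n ℓ κ t L T) {k : ℕ} (hk : k + 1 < n)
    (hC : ∀ j < k, ∀ N, Path ℓ j N → CC ℓ κ t L j N) {ε : ℤ} (hε : ε = 1 ∨ ε = -1) (d : ℕ) :
    ∀ (j : ℕ) (N : ℕ → Node), Path ℓ (k + 1) N → j + 1 + d = k →
      (∀ i < k, i ≠ j → ¬ nle (N j) (N i)) →
      ncont κ (N j) = ncont κ (N k) + ε → ∀ v ∈ Eg κ t L (k + 1) N,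
      L (k + 1) * v = qint t (ncont κ (N k) + ε) • v → v = 0 := by
  induction d with
  | zero =>
    intro j N hN hj hm hc v hv hv2
    obtain rfl : k = j + 1 := by omega
    exact elim_base hs hd hk hN (hC j (by omega) N (hN.mono (by omega))) hε hc hv hv2
  | succ d ih =>
    intro j N hN hj hm hc v hv hv2
    by_contra h0
    have hnle := hm (j + 1) (by omega) (by omega)
    have adC := hN.adC (by omega) hnle
    have adB := hN j (by omega)
    have hcard := (hN.mono (show j ≤ k + 1 by omega)).card
    have hx : L j * v = qint t (ncont κ (N j)) • v := hv j (by omega)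
    have hy : L (j + 1) * v = qint t (ncont κ (N (j + 1))) • v := hv (j + 1) (by omega)
    have hxy : qint t (ncont κ (N j)) ≠ qint t (ncont κ (N (j + 1))) := by
      intro hh
      have := lam_inj hN (by omega) (by omega) (sep_eq hs adB adC (by omega) hh)
      omega
    obtain ⟨h1, h2, h3⟩ := swapv hd (by omega) hx hy hxy rfl
    set γ := (((t - 1) * qint t (ncont κ (N (j + 1))) + 1) /
      (qint t (ncont κ (N (j + 1))) - qint t (ncont κ (N j)))) with hγ
    have hcomm : ∀ i < n, i ≠ j → i ≠ j + 1 → ∀ z : K, L i * v = z • v →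
        L i * (T j * v - γ • v) = z • (T j * v - γ • v) := by
      intro i hi hij hij1 z hz
      rw [mul_sub, mul_smul_comm, ← mul_assoc, hd.TL j i (by omega) hi hij hij1, mul_assoc, hz,
        mul_smul_comm, smul_sub, smul_comm γ z]
    have hw0 := ih (j + 1) (swp N j) (hN.swp (by omega) hnle) (by omega)
      (by
        intro i hi hij
        rw [swp_r]
        by_cases hij' : i = j
        · subst hij'
          rw [swp_l]
          exact hnle
        · rw [swp_o N hij' hij]
          exact hm i hi hij')
      (by
        rw [swp_r, swp_o N (by omega) (by omega), hc])
      (T j * v - γ • v)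
      (by
        intro i hi
        by_cases hij' : i = j
        · subst hij'
          rw [swp_l]
          exact h1
        by_cases hij : i = j + 1
        · subst hij
          rw [swp_r]
          exact h2
        · rw [swp_o N hij' hij]
          exact hcomm i (by omega) hij' hij _ (hv i hi))
      (by
        rw [swp_o N (i := k) (by omega) (by omega)]
        exact hcomm _ (by omega) (by omega) (by omega) _ hv2)
    rw [hw0] at h3
    simp only [mul_zero, smul_zero, sub_zero] at h3
    have h4 := (smul_eq_zero.1 h3.symm).resolve_right h0
    have hyx : qint t (ncont κ (N (j + 1))) - qint t (ncont κ (N j)) ≠ 0 := sub_ne_zero.2 hxy.symm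
    have hg : γ * (qint t (ncont κ (N (j + 1))) - qint t (ncont κ (N j))) =
      (t - 1) * qint t (ncont κ (N (j + 1))) + 1 := div_mul_cancel₀ _ hyx
    rcases mul_eq_zero.1 h4 with h5 | h5
    · refine sep_succ hs adC adB (by omega) 1 (by omega) ?_ (κ := κ)
      rw [qint_succ hs.ne]
      rw [show γ = t by linear_combination -h5] at hg
      linear_combination hg
    · refine sep_succ hs adB adC (by omega) 1 (by omega) ?_ (κ := κ)
      rw [qint_succ hs.ne]
      rw [show γ = -1 by linear_combination h5] at hg
      linear_combination hg

end Alg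
end Paper

namespace Paper

open Polynomial

lemma Ad.ofne {ℓ : ℕ} {S : Finset Node} {A b : Node} (hA : Ad ℓ S A) (hb : Ad ℓ S b)
    (hne : b ≠ A) : Ad ℓ (insert A S) b := by
  refine ⟨by simp [hne, hb.1], ?_⟩
  apply DC.mk'
  · intro X hX
    rw [Finset.mem_insert] at hX
    rcases hX with rfl | hX
    · exact hb.2.lt (by simp)
    · exact hA.2.lt hX
  · intro B X hX hB
    rw [Finset.mem_insert] at hX
    rcases hX with rfl | hX
    · have := hb.2.mem_of_nle (by simp) hB
      simp only [Finset.mem_insert] at this ⊢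
      tauto
    · exact Finset.mem_insert_of_mem (hA.2.mem_of_nle hX hB)


lemma adCrit {ℓ : ℕ} {S : Finset Node} (hS : DC ℓ S) {l r c : ℕ} (hl : l < ℓ)
    (h0 : (l, r, c) ∉ S) (h1 : ∀ r', r = r' + 1 → (l, r', c) ∈ S)
    (h2 : ∀ c', c = c' + 1 → (l, r, c') ∈ S) : Ad ℓ S (l, r, c) := by
  refine ⟨h0, ?_⟩
  apply DC.mk'
  · intro X hX
    rw [Finset.mem_insert] at hX
    rcases hX with rfl | hX
    · exact hl
    · exact hS.lt hX
  · intro B X hX hB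
    rw [Finset.mem_insert] at hX
    rcases hX with rfl | hX
    · obtain ⟨m, r', c'⟩ := B
      obtain ⟨e1, e2, e3⟩ := hB
      simp only at e1 e2 e3
      subst e1
      rw [Finset.mem_insert]
      rcases Nat.lt_or_ge r' r with h | h
      · right
        refine (hS _ _ _ (h1 (r - 1) (by omega))).2 _ _ (by omega) e3
      · rcases Nat.lt_or_ge c' c with h' | h'
        · right
          exact (hS _ _ _ (h2 (c - 1) (by omega))).2 _ _ e2 (by omega)
        · left
          rw [le_antisymm e2 h, le_antisymm e3 h']
    · exact Finset.mem_insert_of_mem (hS.mem_of_nle hX hB)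

/-- If the node right of `A` is not addable then the node above `A` is maximal. -/
lemma right_alt {ℓ : ℕ} {S : Finset Node} (hS : DC ℓ S) {l r c : ℕ} (hA : Ad ℓ S (l, r, c))
    (hn : ¬ Ad ℓ (insert (l, r, c) S) (l, r, c + 1)) :
    ∃ r', r = r' + 1 ∧ (l, r', c) ∈ S ∧ ∀ X ∈ S, X ≠ (l, r', c) → ¬ nle (l, r', c) X := by
  have hnm : ∀ r' c', r ≤ r' → c ≤ c' → (l, r', c') ∉ S := fun r' c' hr hc hh =>
    hA.1 ((hS _ _ _ hh).2 _ _ hr hc)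
  by_cases hex : ∃ r', r = r' + 1 ∧ (l, r', c + 1) ∉ S
  · obtain ⟨r', hr', hx⟩ := hex
    refine ⟨r', hr', hA.below.2 _ _ (by omega) le_rfl (by simp; omega), ?_⟩
    rintro ⟨m, r2, c2⟩ hX hXne ⟨e1, e2, e3⟩
    simp only at e1 e2 e3
    subst e1
    rcases Nat.lt_or_ge r' r2 with h | h
    · exact hnm r2 c2 (by omega) e3 hX
    · obtain rfl : r2 = r' := by omega
      rcases Nat.lt_or_ge c c2 with h' | h'
      · exact hx ((hS _ _ _ hX).2 _ _ le_rfl (by omega))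
      · obtain rfl : c2 = c := by omega
        exact hXne rfl
  · push Not at hex
    refine absurd (adCrit hA.2 hA.below.1 ?_ ?_ ?_) hn
    · simp only [Finset.mem_insert, Prod.mk.injEq]
      rintro (h | h)
      · omega
      · exact hnm _ _ le_rfl (by omega) h
    · intro r' hr'
      exact Finset.mem_insert_of_mem (hex r' hr')
    · intro c' hc'
      obtain rfl : c' = c := by omega
      simp

lemma down_alt {ℓ : ℕ} {S : Finset Node} (hS : DC ℓ S) {l r c : ℕ} (hA : Ad ℓ S (l, r, c))
    (hn : ¬ Ad ℓ (insert (l, r, c) S) (l, r + 1, c)) :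
    ∃ c', c = c' + 1 ∧ (l, r, c') ∈ S ∧ ∀ X ∈ S, X ≠ (l, r, c') → ¬ nle (l, r, c') X := by
  have hnm : ∀ r' c', r ≤ r' → c ≤ c' → (l, r', c') ∉ S := fun r' c' hr hc hh =>
    hA.1 ((hS _ _ _ hh).2 _ _ hr hc)
  by_cases hex : ∃ c', c = c' + 1 ∧ (l, r + 1, c') ∉ S
  · obtain ⟨c', hc', hx⟩ := hex
    refine ⟨c', hc', hA.below.2 _ _ le_rfl (by omega) (by simp; omega), ?_⟩
    rintro ⟨m, r2, c2⟩ hX hXne ⟨e1, e2, e3⟩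
    simp only at e1 e2 e3
    subst e1
    rcases Nat.lt_or_ge c' c2 with h | h
    · exact hnm r2 c2 e2 (by omega) hX
    · obtain rfl : c2 = c' := by omega
      rcases Nat.lt_or_ge r r2 with h' | h'
      · exact hx ((hS _ _ _ hX).2 _ _ (by omega) le_rfl)
      · obtain rfl : r2 = r := by omega
        exact hXne rfl
  · push Not at hex
    refine absurd (adCrit hA.2 hA.below.1 ?_ ?_ ?_) hn
    · simp only [Finset.mem_insert, Prod.mk.injEq]
      rintro (h | h)
      · omega
      · exact hnm _ _ (by omega) le_rfl h
    · intro r' hr'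
      obtain rfl : r' = r := by omega
      simp
    · intro c' hc'
      exact Finset.mem_insert_of_mem (hex c' hc')

section Alg
variable {K : Type*} [Field K] {H : Type*} [Ring H] [Algebra K H]
variable {n ℓ : ℕ} {κ : ℕ → ℤ} {t : K} {L T : ℕ → H}

lemma CC_zero (hs : Sep t n ℓ κ) (hd : HD n ℓ κ t L T) (hn : 0 < n) (N : ℕ → Node) :
    CC ℓ κ t L 0 N := by
  refine ⟨(Finset.range ℓ).image (fun l => qint t (κ l)), ?_, ?_⟩
  · intro β hβ
    simp only [Finset.mem_image, Finset.mem_range] at hβ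
    obtain ⟨l, hl, rfl⟩ := hβ
    refine ⟨(l, 0, 0), adCrit (by intro l r c h; simp [lam] at h) hl (by simp [lam])
      (by omega) (by omega), ?_⟩
    simp [ncont]
  · intro v _
    rw [Finset.prod_image, hd.cyc hn, zero_mul]
    intro l hl m hm hlm
    simp only [Finset.coe_range, Set.mem_Iio] at hl hm
    by_contra hne
    simp only [qint_eq_iff hs.ne] at hlm
    have := hs.ch' l m hne hl hm 0 (by simpa using hn)
    simp [hlm] at this

lemma elim_all (hs : Sep t n ℓ κ) (hd : HD n ℓ κ t L T) {k : ℕ} (hk : k + 1 < n)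
    (hC : ∀ j < k, ∀ N, Path ℓ j N → CC ℓ κ t L j N) {ε : ℤ} (hε : ε = 1 ∨ ε = -1)
    {N : ℕ → Node} (hN : Path ℓ (k + 1) N) {B : Node} (hB : B ∈ lam N k)
    (hmax : ∀ X ∈ lam N k, X ≠ B → ¬ nle B X) (hc : ncont κ B = ncont κ (N k) + ε)
    {v : H} (hv : v ∈ Eg κ t L (k + 1) N)
    (hv2 : L (k + 1) * v = qint t (ncont κ (N k) + ε) • v) : v = 0 := by
  obtain ⟨j, hj, rfl⟩ := mem_lam.1 hB
  refine elim_step hs hd hk hC hε (k - (j + 1)) j N hN (by omega) ?_ hc v hv hv2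
  intro i hi hij
  refine hmax _ (mem_lam.2 ⟨i, hi, rfl⟩) (fun hh => hij (lam_inj hN (by omega) (by omega) hh))

lemma CC_succ (hs : Sep t n ℓ κ) (hd : HD n ℓ κ t L T) {k : ℕ} (hk : k + 1 < n)
    (hC : ∀ j < k + 1, ∀ N, Path ℓ j N → CC ℓ κ t L j N)
    {N : ℕ → Node} (hN : Path ℓ (k + 1) N) : CC ℓ κ t L (k + 1) N := by
  have hCk := hC k (by omega) N (hN.mono (by omega))
  obtain ⟨S, hS, hkill⟩ := id hCk
  set a := ncont κ (N k) with ha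
  have hcard := (hN.mono (show k ≤ k + 1 by omega)).card
  have hA := hN k (by omega)
  have hDC := (hN.mono (show k ≤ k + 1 by omega)).dc
  have h12 : qint t (a + 1) ≠ qint t (a + -1) := by
    rw [ne_eq, qint_eq_iff hs.ne, show a + 1 - (a + -1) = 2 by ring]
    exact hs.fac 2 (by omega) (by omega)
  have hnS : ∀ ε : ℤ, (ε = 1 ∨ ε = -1) → qint t (a + ε) ∉ S := by
    intro ε hε hh
    obtain ⟨b, hb, hb2⟩ := hS _ hh
    exact sep_succ hs hb hA (by omega) ε hε hb2.symm
  set S2 : Finset K := insert (qint t (a + 1)) (insert (qint t (a + -1)) S) with hS2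
  have hkill2 : ∀ v ∈ Eg κ t L (k + 1) N, aeval (L (k + 1)) (∏ β ∈ S2, (X - C β)) * v = 0 := by
    intro v hv
    rw [hS2, Finset.prod_insert (by simp [h12, hnS 1]), Finset.prod_insert (hnS _ (by simp)),
      ← mul_assoc, map_mul, mul_assoc]
    have hLL : ∀ j < k + 1, L j * L (k + 1) = L (k + 1) * L j :=
      fun j hj => hd.LL _ _ (by omega) (by omega)
    set P : K[X] := ∏ β ∈ S, (X - C β) with hP
    have hPhi : Phi t L T k * v ∈ Eg κ t L k N := by
      refine Eg.mul_mem (Eg.mono hv (by omega)) (fun j hj => ?_)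
      have e1 := hd.TL k j hk (by omega) (by omega) (by omega)
      have e2 := hd.LL j k (by omega) (by omega)
      have e3 := hLL j (by omega)
      simp only [Phi, mul_add, add_mul, mul_sub, sub_mul, smul_mul_assoc, mul_smul_comm, mul_assoc,
        reassoc e1, e2, e3, mul_one, one_mul]
    have h1 := hkill _ hPhi
    rw [← mul_assoc, aeval_semi (hd.phi2 hk), mul_assoc] at h1
    have hu : aeval (L (k + 1)) P * v ∈ Eg κ t L (k + 1) N :=
      aeval_stab (fun v hv => Eg.mul_mem hv hLL) P v hv
    set u := aeval (L (k + 1)) P * v with hu_def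
    have h2 : (Phi t L T k * Phi t L T k) * u = 0 := by rw [mul_assoc, h1, mul_zero]
    rw [hd.phi3 hk, neg_mul, neg_eq_zero] at h2
    have hLk : L k * u = qint t a • u := hu k (by omega)
    have q1 := qint_succ hs.ne a
    have q2 := qint_succ hs.ne (a + -1)
    rw [neg_add_cancel_right] at q2
    have e2 := hLL k (by omega)
    have h3 : t • (aeval (L (k + 1)) ((X - C (qint t (a + 1))) * (X - C (qint t (a + -1)))) * u) =
        (L (k + 1) - t • L k - 1) * (t • L (k + 1) + 1 - L k) * u := by
      simp only [map_mul, map_sub, aeval_X, aeval_C, Algebra.algebraMap_eq_smul_one, q1,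
        mul_add, add_mul, mul_sub, sub_mul, smul_mul_assoc, mul_smul_comm, mul_assoc,
        reassoc e2, hLk, mul_one, one_mul, q2]
      module
    rw [h2, smul_eq_zero, or_iff_right hs.ne] at h3
    exact h3
  refine ⟨S2.filter (fun β => ∃ b, Ad ℓ (lam N (k + 1)) b ∧ β = qint t (ncont κ b)),
    fun β hβ => (Finset.mem_filter.1 hβ).2, ?_⟩
  set Q : K[X] := ∏ β ∈ S2.filter (fun β => ∃ b, Ad ℓ (lam N (k + 1)) b ∧ β = qint t (ncont κ b)),
    (X - C β) with hQ
  intro v hv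
  have hLL : ∀ j < k + 1, L j * L (k + 1) = L (k + 1) * L j :=
      fun j hj => hd.LL _ _ (by omega) (by omega)
  refine lagr (x := L (k + 1)) (V := Eg κ t L (k + 1) N)
    (W := LinearMap.ker (LinearMap.mulLeft K (aeval (L (k + 1)) Q)))
    (fun v hv => Eg.mul_mem hv hLL) S2 ?_ v hv (hkill2 v hv)
  intro β hβ u hu hx
  rw [LinearMap.mem_ker, LinearMap.mulLeft_apply]
  by_cases hgood : ∃ b, Ad ℓ (lam N (k + 1)) b ∧ β = qint t (ncont κ b)
  · rw [aeval_eig hx, hQ, eval_prod,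
      Finset.prod_eq_zero (Finset.mem_filter.2 ⟨hβ, hgood⟩) (by simp), zero_smul]
  · suffices u = 0 by rw [this, mul_zero]
    have hLk : L k * u = qint t a • u := hu k (by omega)
    rw [lam_succ] at hgood
    rcases hNk : N k with ⟨l, r, c⟩
    rw [hNk] at hA hgood
    have ha2 : a = κ l + c - r := by rw [ha, hNk, ncont]
    rw [hS2, Finset.mem_insert, Finset.mem_insert] at hβ
    rcases hβ with rfl | rfl | hβ
    · have hn : ¬ Ad ℓ (insert (l, r, c) (lam N k)) (l, r, c + 1) := by
        intro hh
        refine hgood ⟨_, hh, ?_⟩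
        rw [ha2, ncont]
        congr 1
        push_cast
        ring
      obtain ⟨r', hr', hm, hmax⟩ := right_alt hDC hA hn
      refine elim_all hs hd hk (fun j hj => hC j (by omega)) (ε := 1) (by simp) hN hm hmax ?_ hu hx
      rw [← ha, ha2, ncont, hr']
      push_cast
      ring
    · have hn : ¬ Ad ℓ (insert (l, r, c) (lam N k)) (l, r + 1, c) := by
        intro hh
        refine hgood ⟨_, hh, ?_⟩
        rw [ha2, ncont]
        congr 1
        push_cast
        ring
      obtain ⟨c', hc', hm, hmax⟩ := down_alt hDC hA hn
      refine elim_all hs hd hk (fun j hj => hC j (by omega)) (ε := -1) (by simp) hN hm hmax ?_ hu hx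
      rw [← ha, ha2, ncont, hc']
      push_cast
      ring
    · obtain ⟨b, hb, hb2⟩ := hS β hβ
      by_cases hbA : b = (l, r, c)
      · rw [hbA, ← hNk, ← ha] at hb2
        rw [hb2] at hx
        exact noDouble hs hd hk hCk (Eg.mono hu (by omega)) hLk hx
      · exact absurd ⟨b, hA.ofne hb hbA, hb2⟩ hgood

lemma CC_all (hs : Sep t n ℓ κ) (hd : HD n ℓ κ t L T) (k : ℕ) (hk : k < n) :
    ∀ N, Path ℓ k N → CC ℓ κ t L k N := by
  induction k using Nat.strong_induction_on with
  | _ k ih =>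
    intro N hN
    rcases k with _ | k
    · exact CC_zero hs hd hk N
    · exact CC_succ hs hd hk (fun j hj => ih j hj (by omega)) hN

/-- The joint eigenspaces indexed by paths span. -/
theorem span_paths (hs : Sep t n ℓ κ) (hd : HD n ℓ κ t L T) (W : Submodule K H)
    (hW : ∀ N, Path ℓ n N → ∀ v ∈ Eg κ t L n N, v ∈ W) (v : H) : v ∈ W := by
  have key : ∀ d k, k + d = n → ∀ N, Path ℓ k N → ∀ v ∈ Eg κ t L k N, v ∈ W := by
    intro d
    induction d with
    | zero => intro k hk; obtain rfl : k = n := by omega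
              exact hW
    | succ d ih =>
      intro k hk N hN v hv
      obtain ⟨S, hS, hkill⟩ := CC_all hs hd k (by omega) N hN
      refine lagr (x := L k) (V := Eg κ t L k N) (W := W)
        (fun v hv => Eg.mul_mem hv (fun j hj => hd.LL _ _ (by omega) (by omega))) S ?_ v hv
        (hkill v hv)
      intro β hβ u hu hx
      obtain ⟨b, hb, rfl⟩ := hS β hβ
      have hcong : ∀ j < k, N j = Function.update N k b j := fun j hj => by
        rw [Function.update_of_ne (by omega)]
      refine ih (k + 1) (by omega) (Function.update N k b) ?_ u ?_
      · intro j hj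
        rcases Nat.lt_succ_iff_lt_or_eq.1 hj with h | rfl
        · rw [← hcong j h, ← lam_congr (fun i hi => hcong i (by omega))]
          exact hN j h
        · rw [← lam_congr hcong, Function.update_self]
          exact hb
      · intro j hj
        rcases Nat.lt_succ_iff_lt_or_eq.1 hj with h | rfl
        · rw [← hcong j h]
          exact hu j h
        · rw [Function.update_self]
          exact hx
  exact key n 0 (by omega) (fun _ => (0, 0, 0)) (by intro j hj; omega) v (by intro j hj; omega)

end Alg
end Paper

namespace Paper

lemma dcl_mem {C : Finset ℕ} (h : ∀ c ∈ C, ∀ c' ≤ c, c' ∈ C) (c : ℕ) : c ∈ C ↔ c < C.card := by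
  constructor
  · intro hc
    have : Finset.range (c + 1) ⊆ C := fun x hx => h c hc x (by simp at hx; omega)
    have := Finset.card_le_card this
    simp at this
    omega
  · intro hc
    by_contra hn
    have : C ⊆ Finset.range c := by
      intro x hx
      by_contra hx2
      simp at hx2
      exact hn (h x hx c hx2)
    have := Finset.card_le_card this
    simp at this
    omega

lemma Path.bd {ℓ n : ℕ} {N : ℕ → Node} (h : Path ℓ n N) {j : ℕ} (hj : j < n) :
    (N j).1 < ℓ ∧ (N j).2.1 < n ∧ (N j).2.2 < n := by
  have h1 := h j hj
  have hc := (h.mono hj.le).card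
  have hle : (comp (lam N j) (N j).1).card ≤ j := by
    exact (Finset.card_le_card (Finset.filter_subset _ _)).trans hc.le
  have h1' : Ad ℓ (lam N j) ((N j).1, (N j).2.1, (N j).2.2) := h1
  have a := h1'.below.1
  have b := h1'.row_le
  have c := h1'.col_le
  refine ⟨a, by omega, by omega⟩

/-- Row lengths of a set of nodes. -/
def rlen (S : Finset Node) (l r : ℕ) : ℕ := (S.filter (fun A => A.1 = l ∧ A.2.1 = r)).card

lemma rlen_mem {ℓ : ℕ} {S : Finset Node} (hS : DC ℓ S) (l r c : ℕ) :
    c < rlen S l r ↔ (l, r, c) ∈ S := by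
  have hi : Set.InjOn (fun A : Node => A.2.2) (S.filter (fun A => A.1 = l ∧ A.2.1 = r) : Finset Node) := by
    rintro ⟨a, b, c⟩ h1 ⟨a', b', c'⟩ h2 h3
    simp at h1 h2 h3
    obtain ⟨_, rfl, rfl⟩ := h1
    obtain ⟨_, rfl, rfl⟩ := h2
    simp [h3]
  have hm : ∀ c, c ∈ (S.filter (fun A => A.1 = l ∧ A.2.1 = r)).image (fun A : Node => A.2.2) ↔
      (l, r, c) ∈ S := by
    intro c
    simp only [Finset.mem_image, Finset.mem_filter]
    constructor
    · rintro ⟨⟨a, b, c⟩, ⟨h1, h2, h3⟩, h4⟩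
      simp at h2 h3 h4
      subst h2 h3 h4
      exact h1
    · intro h
      exact ⟨_, ⟨h, rfl, rfl⟩, rfl⟩
  rw [rlen, ← Finset.card_image_of_injOn hi, ← dcl_mem, hm]
  intro c hc c' hcc
  rw [hm] at hc ⊢
  exact (hS _ _ _ hc).2 _ _ le_rfl hcc

lemma rlen_anti {ℓ : ℕ} {S : Finset Node} (hS : DC ℓ S) (l : ℕ) : Antitone (rlen S l) := by
  intro r r' hr
  by_contra h
  push Not at h
  have h1 := (rlen_mem hS _ _ _).1 h
  have h2 := (rlen_mem hS _ _ _).2 ((hS _ _ _ h1).2 r _ hr le_rfl)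
  omega

lemma rlen_zero {ℓ : ℕ} {S : Finset Node} (hS : DC ℓ S) (l r : ℕ) (h : ∀ c, (l, r, c) ∉ S) :
    rlen S l r = 0 := by
  by_contra hh
  exact h 0 ((rlen_mem hS _ _ _).1 (by omega))

/-- The multipartition of a path. -/
def pathShape {ℓ n : ℕ} {N : ℕ → Node} (h : Path ℓ n N) : Multipartition ℓ n where
  part := rlen (lam N n)
  comp_bound := by
    intro l hl r
    apply rlen_zero h.dc
    intro c hc
    have := (h.dc _ _ _ hc).1
    omega
  antitone := rlen_anti h.dc
  row_bound := by
    intro l r hr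
    apply rlen_zero h.dc
    intro c hc
    obtain ⟨i, hi, hN⟩ := mem_lam.1 hc
    have := (h.bd hi).2.1
    rw [hN] at this
    simp at this
    omega
  size := by
    rw [← Finset.sum_product']
    conv_rhs => rw [← h.card]
    rw [Finset.card_eq_sum_card_fiberwise (f := fun A : Node => (A.1, A.2.1))
      (t := Finset.range ℓ ×ˢ Finset.range n)]
    · apply Finset.sum_congr rfl
      rintro ⟨a, b⟩ _
      simp [rlen]
    · intro A hA
      obtain ⟨i, hi, hN⟩ := mem_lam.1 hA
      have := h.bd hi
      rw [hN] at this
      simp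
      exact ⟨this.1, this.2.1⟩

lemma pathShape_diagram {ℓ n : ℕ} {N : ℕ → Node} (h : Path ℓ n N) (A : Node) :
    A ∈ (pathShape h).diagram ↔ ∃ i < n, N i = A := by
  rw [← mem_lam]
  exact rlen_mem h.dc _ _ _

/-- Entries of a path. -/
def pathEntry (n : ℕ) (N : ℕ → Node) (A : Node) : ℕ :=
  ∑ i ∈ Finset.range n, if N i = A then i + 1 else 0

lemma pathEntry_eq {ℓ n : ℕ} {N : ℕ → Node} (h : Path ℓ n N) {k : ℕ} (hk : k < n) :
    pathEntry n N (N k) = k + 1 := by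
  rw [pathEntry, Finset.sum_eq_single k]
  · simp
  · intro b hb hbk
    rw [if_neg]
    intro hh
    exact hbk (lam_inj h (by simpa using hb) hk hh)
  · intro hh
    simp at hh
    omega

/-- The standard tableau of a path. -/
def pathTab {ℓ n : ℕ} {N : ℕ → Node} (h : Path ℓ n N) : StdTableau ℓ n where
  shape := pathShape h
  entry := pathEntry n N
  entry_zero := by
    intro A hA
    rw [pathShape_diagram] at hA
    push Not at hA
    apply Finset.sum_eq_zero
    intro i hi
    rw [if_neg (hA i (by simpa using hi))]
  bijOn := by
    refine ⟨?_, ?_, ?_⟩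
    · intro A hA
      obtain ⟨i, hi, rfl⟩ := (pathShape_diagram h _).1 hA
      rw [pathEntry_eq h hi]
      simp
      omega
    · intro A hA B hB hAB
      obtain ⟨i, hi, rfl⟩ := (pathShape_diagram h _).1 hA
      obtain ⟨j, hj, rfl⟩ := (pathShape_diagram h _).1 hB
      rw [pathEntry_eq h hi, pathEntry_eq h hj] at hAB
      have : i = j := by omega
      rw [this]
    · intro k hk
      simp at hk
      refine ⟨N (k - 1), (pathShape_diagram h _).2 ⟨k - 1, by omega, rfl⟩, ?_⟩
      rw [pathEntry_eq h (by omega)]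
      omega
  row_inc := by
    intro l r c hA
    obtain ⟨j, hj, hN⟩ := (pathShape_diagram h _).1 hA
    have h1 := h j hj
    rw [hN] at h1
    have h2 := h1.below.2 r c le_rfl (by omega) (by simp)
    obtain ⟨i, hi, hNi⟩ := mem_lam.1 h2
    rw [← hN, ← hNi, pathEntry_eq h hj, pathEntry_eq h (by omega)]
    omega
  col_inc := by
    intro l r c hA
    obtain ⟨j, hj, hN⟩ := (pathShape_diagram h _).1 hA
    have h1 := h j hj
    rw [hN] at h1
    have h2 := h1.below.2 r c (by omega) le_rfl (by simp)
    obtain ⟨i, hi, hNi⟩ := mem_lam.1 h2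
    rw [← hN, ← hNi, pathEntry_eq h hj, pathEntry_eq h (by omega)]
    omega

lemma StdTableau.node_mem {ℓ n : ℕ} (T : StdTableau ℓ n) {k : ℕ} (hk : k < n) :
    T.node (k + 1) ∈ T.shape.diagram ∧ T.entry (T.node (k + 1)) = k + 1 := by
  have : ∃ A ∈ T.shape.diagram, T.entry A = k + 1 := T.bijOn.2.2 ⟨by omega, by omega⟩
  exact ⟨Function.invFunOn_mem this, Function.invFunOn_eq this⟩

lemma StdTableau.node_entry {ℓ n : ℕ} (T : StdTableau ℓ n) {A : Node} (hA : A ∈ T.shape.diagram) :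
    ∃ k < n, T.entry A = k + 1 ∧ T.node (k + 1) = A := by
  have h1 := T.bijOn.1 hA
  simp at h1
  have hk : T.entry A - 1 < n := by omega
  refine ⟨T.entry A - 1, hk, by omega, ?_⟩
  have h2 := T.node_mem hk
  apply T.bijOn.2.1 h2.1 hA
  rw [h2.2]
  omega

lemma pathTab_node {ℓ n : ℕ} {N : ℕ → Node} (h : Path ℓ n N) {k : ℕ} (hk : k < n) :
    (pathTab h).node (k + 1) = N k := by
  have h2 := (pathTab h).node_mem hk
  apply (pathTab h).bijOn.2.1 h2.1 ((pathShape_diagram h _).2 ⟨k, hk, rfl⟩)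
  rw [h2.2]
  exact (pathEntry_eq h hk).symm

lemma StdTableau.path_aux {ℓ n : ℕ} (T : StdTableau ℓ n) {A B : Node} (hA : A ∈ T.shape.diagram)
    (hB : B ∈ T.shape.diagram) {j : ℕ} (hj : T.entry A = j + 1) (h : T.entry B < T.entry A) :
    B ∈ lam (fun k => T.node (k + 1)) j := by
  obtain ⟨k, hk, h1, h2⟩ := T.node_entry hB
  exact mem_lam.2 ⟨k, by omega, h2⟩

lemma StdTableau.path {ℓ n : ℕ} (T : StdTableau ℓ n) {m : ℕ} (hm : m ≤ n) :
    Path ℓ m (fun k => T.node (k + 1)) := by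
  induction m with
  | zero => intro j hj; omega
  | succ m ih =>
    have ih := ih (by omega)
    intro j hj
    rcases Nat.lt_succ_iff_lt_or_eq.1 hj with h | rfl
    · exact ih j h
    · have hn := T.node_mem (k := j) (by omega)
      rcases hX : T.node (j + 1) with ⟨l, r, c⟩
      rw [hX] at hn
      show Ad ℓ (lam (fun k => T.node (k + 1)) j) (T.node (j + 1))
      rw [hX]
      have hd : c < T.shape.part l r := hn.1
      apply adCrit ih.dc
      · by_contra hl
        have := T.shape.comp_bound l (by omega) r
        omega
      · intro hmem
        obtain ⟨i, hi, hN⟩ := mem_lam.1 hmem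
        have h1 := (T.node_mem (k := i) (by omega)).2
        rw [hN, hn.2] at h1
        omega
      · rintro r' rfl
        refine T.path_aux hn.1 ?_ hn.2 (T.col_inc l r' c hn.1)
        exact lt_of_lt_of_le hd (T.shape.antitone l (Nat.le_succ r'))
      · rintro c' rfl
        refine T.path_aux hn.1 ?_ hn.2 (T.row_inc l r c' hn.1)
        show c' < T.shape.part l r
        omega

lemma StdTableau.ext' {ℓ n : ℕ} (S T : StdTableau ℓ n)
    (h : ∀ k < n, S.node (k + 1) = T.node (k + 1)) : S = T := by
  have key : ∀ (S T : StdTableau ℓ n), (∀ k < n, S.node (k + 1) = T.node (k + 1)) → ∀ A,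
      A ∈ S.shape.diagram → A ∈ T.shape.diagram ∧ S.entry A = T.entry A := by
    intro S T h A hA
    obtain ⟨k, hk, h1, h2⟩ := S.node_entry hA
    have h3 := T.node_mem hk
    rw [← h k hk, h2] at h3
    exact ⟨h3.1, by omega⟩
  have k1 := key S T h
  have k2 := key T S (fun k hk => (h k hk).symm)
  have hp : S.shape.part = T.shape.part := by
    funext l r
    by_contra hne
    rcases lt_or_gt_of_ne hne with hlt | hlt
    · have : (l, r, S.shape.part l r) ∈ S.shape.diagram := (k2 (l, r, S.shape.part l r) hlt).1
      exact lt_irrefl (S.shape.part l r) this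
    · have : (l, r, T.shape.part l r) ∈ T.shape.diagram := (k1 (l, r, T.shape.part l r) hlt).1
      exact lt_irrefl (T.shape.part l r) this
  have he : S.entry = T.entry := by
    funext A
    by_cases hA : A ∈ S.shape.diagram
    · exact (k1 A hA).2
    · rw [S.entry_zero A hA, T.entry_zero A (fun hh => hA (k2 A hh).1)]
  rcases S with ⟨⟨p, _, _, _, _⟩, e, _, _, _, _⟩
  rcases T with ⟨⟨p', _, _, _, _⟩, e', _, _, _, _⟩
  simp only at hp he
  subst hp he
  rfl

lemma finite_tab (ℓ n : ℕ) : Finite (StdTableau ℓ n) := by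
  apply Finite.of_injective (β := Fin n → Fin ℓ × Fin n × Fin n)
    (fun T k => (⟨(T.node (k.1 + 1)).1, ((T.path le_rfl).bd k.2).1⟩,
      ⟨(T.node (k.1 + 1)).2.1, ((T.path le_rfl).bd k.2).2.1⟩,
      ⟨(T.node (k.1 + 1)).2.2, ((T.path le_rfl).bd k.2).2.2⟩))
  intro S T hST
  apply StdTableau.ext'
  intro k hk
  have := congrFun hST ⟨k, hk⟩
  simp at this
  exact Prod.ext this.1 (Prod.ext this.2.1 this.2.2)

lemma content_mem {ℓ n : ℕ} (κ : ℕ → ℤ) (T : StdTableau ℓ n) {k : ℕ} (hk : k < n) :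
    content κ T (k + 1) ∈ contFinset ℓ n κ := by
  have hb := (T.path le_rfl).bd hk
  simp only [contFinset, Finset.mem_filter, Finset.mem_image]
  refine ⟨⟨T.node (k + 1), ?_, rfl⟩, T, k + 1, by omega, by omega, rfl⟩
  simp
  exact hb

lemma tab_sep {K : Type*} [Field K] {n ℓ : ℕ} {κ : ℕ → ℤ} {x : K} (hs : Sep x n ℓ κ)
    (S T : StdTableau ℓ n)
    (h : ∀ k < n, qint x (content κ S (k + 1)) = qint x (content κ T (k + 1))) : S = T := by
  apply StdTableau.ext'
  intro k
  induction k using Nat.strong_induction_on with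
  | _ k ih =>
    intro hk
    have hl : lam (fun k => S.node (k + 1)) k = lam (fun k => T.node (k + 1)) k :=
      lam_congr (fun j hj => ih j hj (by omega))
    have hA := S.path le_rfl k hk
    have hB := T.path le_rfl k hk
    rw [hl] at hA
    apply sep_eq hs hA hB
    · rw [((T.path le_rfl).mono hk.le).card]
      omega
    · exact h k hk

end Paper

namespace Paper

section Act

variable {K H ι : Type*} [Field K] [Ring H] [Algebra K H]

/-- `x` acts on the `s`-part by the scalar `f s`. -/
def Act (E : ι → H → Prop) (x : H) (f : ι → K) : Prop := ∀ s v, E s v → x * v = f s • v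

variable {E : ι → H → Prop}

lemma Act.add {x y : H} {f g : ι → K} (hx : Act E x f) (hy : Act E y g) :
    Act E (x + y) (fun s => f s + g s) := by
  intro s v hv
  rw [add_mul, hx s v hv, hy s v hv, add_smul]

lemma Act.mul {x y : H} {f g : ι → K} (hx : Act E x f) (hy : Act E y g) :
    Act E (x * y) (fun s => f s * g s) := by
  intro s v hv
  rw [mul_assoc, hy s v hv, mul_smul_comm, hx s v hv, smul_smul, mul_comm]

lemma Act.const (c : K) : Act E (algebraMap K H c) (fun _ => c) := by
  intro s v _
  rw [Algebra.smul_def]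

lemma Act.one : Act E (1 : H) (fun _ => (1 : K)) := by
  intro s v _
  simp

lemma Act.zero : Act E (0 : H) (fun _ => (0 : K)) := by
  intro s v _
  simp

lemma Act.sub {x y : H} {f g : ι → K} (hx : Act E x f) (hy : Act E y g) :
    Act E (x - y) (fun s => f s - g s) := by
  intro s v hv
  rw [sub_mul, hx s v hv, hy s v hv, sub_smul]

lemma Act.list_prod {α : Type*} (l : List α) (x : α → H) (f : α → ι → K)
    (h : ∀ a ∈ l, Act E (x a) (f a)) :
    Act E (l.map x).prod (fun s => (l.map (fun a => f a s)).prod) := by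
  induction l with
  | nil => simpa using Act.one
  | cons a l ih =>
    simp only [List.map_cons, List.prod_cons]
    exact (h a (by simp)).mul (ih (fun b hb => h b (by simp [hb])))

lemma Act.sum {α : Type*} (l : Finset α) (x : α → H) (f : α → ι → K)
    (h : ∀ a ∈ l, Act E (x a) (f a)) :
    Act E (∑ a ∈ l, x a) (fun s => ∑ a ∈ l, f a s) := by
  intro s v hv
  rw [Finset.sum_mul, Finset.sum_smul]
  exact Finset.sum_congr rfl (fun a ha => h a ha s v hv)

lemma Act.ext (hE : ∀ W : Submodule K H, (∀ s v, E s v → v ∈ W) → ∀ v, v ∈ W) {x y : H}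
    {f : ι → K} (hx : Act E x f) (hy : Act E y f) : x = y := by
  have := hE (LinearMap.ker (LinearMap.mulLeft K (x - y))) (by
    intro s v hv
    rw [LinearMap.mem_ker, LinearMap.mulLeft_apply, sub_mul, hx s v hv, hy s v hv, sub_self]) 1
  rw [LinearMap.mem_ker, LinearMap.mulLeft_apply, mul_one] at this
  exact sub_eq_zero.1 this

end Act

section Oring

variable {K : Type*} [Field K] {O : Subring K}

lemma qintU_coe (t : Oˣ) (d : ℤ) : ((qintU t d : O) : K) = qint ((t : O) : K) d := by
  unfold qintU qint
  split_ifs with h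
  · simp
  · have : ∀ m : ℤ, (((t ^ m : Oˣ) : O) : K) = ((t : O) : K) ^ m := by
      intro m
      have h1 : (((t ^ m : Oˣ) : O) : K) = ((Units.map O.subtype.toMonoidHom (t ^ m) : Kˣ) : K) := rfl
      rw [h1, map_zpow, Units.val_zpow_eq_zpow_val]
      rfl
    simp [this]

lemma unit_coe_ne (t : Oˣ) : ((t : O) : K) ≠ 0 := by
  have : ((Units.map O.subtype.toMonoidHom t : Kˣ) : K) ≠ 0 := Units.ne_zero _
  exact this

lemma unit_coe_zpow (t : Oˣ) (m : ℤ) : (((t ^ m : Oˣ) : O) : K) = ((t : O) : K) ^ m := by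
  have h1 : (((t ^ m : Oˣ) : O) : K) = ((Units.map O.subtype.toMonoidHom (t ^ m) : Kˣ) : K) := rfl
  rw [h1, map_zpow, Units.val_zpow_eq_zpow_val]
  rfl

lemma qintU_sub (t : Oˣ) (a b : ℤ) :
    qintU t a - qintU t b = ((t ^ b : Oˣ) : O) * qintU t (a - b) := by
  apply Subtype.ext
  have := qint_add (unit_coe_ne t) b (a - b)
  rw [add_sub_cancel] at this
  simp only [AddSubgroupClass.coe_sub, Subring.coe_mul, qintU_coe, unit_coe_zpow]
  rw [this]
  ring

lemma sep_of {t : Oˣ} {n ℓ : ℕ} {κ : ℕ → ℤ} (h : SeparatesU t n ℓ κ) :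
    Sep ((t : O) : K) n ℓ κ := by
  obtain ⟨u, hu⟩ := h
  have h0 : ((u : O) : K) ≠ 0 := unit_coe_ne u
  rw [hu, Subring.coe_mul] at h0
  have h1 := left_ne_zero_of_mul h0
  have h2 := right_ne_zero_of_mul h0
  refine ⟨unit_coe_ne t, ?_, ?_⟩
  · intro d hd hdn
    lift d to ℕ using hd.le
    have h3 : (∏ d ∈ Finset.Icc 1 n, ((qintU t (d : ℤ) : O) : K)) ≠ 0 := by
      simpa using h1
    have := Finset.prod_ne_zero_iff.1 h3 d (by simp; omega)
    rwa [qintU_coe] at this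
  · intro l m hlm hm d hd1 hd2
    have h3 : (∏ l ∈ Finset.range ℓ, ∏ m ∈ Finset.Ioo l ℓ,
        ∏ d ∈ Finset.Ioo (-(n : ℤ)) (n : ℤ), ((qintU t (κ l - κ m + d) : O) : K)) ≠ 0 := by
      simpa using h2
    have := Finset.prod_ne_zero_iff.1 (Finset.prod_ne_zero_iff.1
      (Finset.prod_ne_zero_iff.1 h3 l (by simp; omega)) m (by simp; omega)) d (by simp; omega)
    rwa [qintU_coe] at this

lemma inv_poly {R : Type*} [CommRing R] (s : Finset R) (h : ∀ u ∈ s, IsUnit u) :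
    ∃ g : Polynomial R, ∀ u ∈ s, u * g.eval u = 1 := by
  induction s using Finset.induction_on with
  | empty => exact ⟨0, by simp⟩
  | insert a s ha ih =>
    obtain ⟨g, hg⟩ := ih (fun u hu => h u (by simp [hu]))
    obtain ⟨b, hb⟩ := (h a (by simp)).exists_right_inv
    refine ⟨g + Polynomial.C b - Polynomial.C b * Polynomial.X * g, ?_⟩
    intro u hu
    simp only [Polynomial.eval_add, Polynomial.eval_sub, Polynomial.eval_mul, Polynomial.eval_C,
      Polynomial.eval_X]
    rcases Finset.mem_insert.1 hu with rfl | hu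
    · linear_combination (1 - u * g.eval u) * hb
    · linear_combination (1 - b * u) * hg u hu

end Oring

section Hecke

variable (K : Type*) [Field K] (tK : Kˣ) (n ℓ : ℕ) (κ : ℕ → ℤ)

/-- `L` indexed by naturals. -/
noncomputable def Lnat (k : ℕ) : CycHecke K tK n ℓ κ :=
  if h : k < n then Lgen K tK n ℓ κ ⟨k, h⟩ else 0

/-- `T` indexed by naturals. -/
noncomputable def Tnat (k : ℕ) : CycHecke K tK n ℓ κ :=
  if h : k < n - 1 then Tgen K tK n ℓ κ ⟨k, h⟩ else 0

lemma qintU_field {K : Type*} [Field K] (t : Kˣ) (d : ℤ) : qintU t d = qint (t : K) d := by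
  unfold qintU qint
  split_ifs with h
  · rfl
  · simp only [Units.val_zpow_eq_zpow_val]

lemma gen_quad {K H : Type*} [Field K] [Ring H] [Algebra K H] {T : H} {t : K}
    (h : (T + 1) * (T - algebraMap K _ t) = 0) : T * T = (t - 1) • T + t • (1 : H) := by
  rw [Algebra.algebraMap_eq_smul_one, add_mul, mul_sub, mul_smul_comm, mul_one, one_mul] at h
  rw [sub_smul, one_smul, ← sub_eq_zero, ← h]
  abel

lemma gen_LT {K H : Type*} [Field K] [Ring H] [Algebra K H] {T a b : H} {t : K}
    (h : b * (T - algebraMap K _ t + 1) = T * a + 1) : b * T = T * a + 1 + (t - 1) • b := by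
  rw [Algebra.algebraMap_eq_smul_one, mul_add, mul_sub, mul_smul_comm, mul_one] at h
  rw [← h, sub_smul, one_smul]
  abel

lemma hd_quad (r : Fin (n - 1)) : Tgen K tK n ℓ κ r * Tgen K tK n ℓ κ r =
    ((tK : K) - 1) • Tgen K tK n ℓ κ r + (tK : K) • (1 : CycHecke K tK n ℓ κ) := by
  have := RingQuot.mkAlgHom_rel K (HeckeRel.quad (t := tK) (ℓ := ℓ) (κ := κ) r)
  simp only [map_mul, map_add, map_sub, map_one, map_zero, AlgHom.commutes] at this
  change (Tgen K tK n ℓ κ r + 1) * (Tgen K tK n ℓ κ r - algebraMap K _ (tK : K)) = 0 at this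
  exact gen_quad this

lemma hd_LT (r : Fin (n - 1)) : Lgen K tK n ℓ κ (pR r) * Tgen K tK n ℓ κ r =
    Tgen K tK n ℓ κ r * Lgen K tK n ℓ κ (pL r) + 1 + ((tK : K) - 1) • Lgen K tK n ℓ κ (pR r) := by
  have := RingQuot.mkAlgHom_rel K (HeckeRel.LT (t := tK) (ℓ := ℓ) (κ := κ) r)
  simp only [map_mul, map_add, map_sub, map_one, AlgHom.commutes] at this
  change Lgen K tK n ℓ κ (pR r) * (Tgen K tK n ℓ κ r - algebraMap K _ (tK : K) + 1) =
    Tgen K tK n ℓ κ r * Lgen K tK n ℓ κ (pL r) + 1 at this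
  exact gen_LT this

lemma hd_cyc (h : 0 < n) : Polynomial.aeval (Lgen K tK n ℓ κ ⟨0, h⟩)
    (∏ l ∈ Finset.range ℓ, (Polynomial.X - Polynomial.C (qint (tK : K) (κ l)))) = 0 := by
  have := RingQuot.mkAlgHom_rel K (HeckeRel.cyc (t := tK) (ℓ := ℓ) (κ := κ) h)
  rw [map_zero, map_list_prod, List.map_map] at this
  rw [Finset.prod_eq_multiset_prod, Finset.range_val, ← Multiset.coe_range, Multiset.map_coe,
    Multiset.prod_coe, map_list_prod, List.map_map, ← this]
  congr 1
  apply List.map_congr_left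
  intro l _
  simp only [Function.comp_apply, map_sub, Polynomial.aeval_X, Polynomial.aeval_C, AlgHom.commutes,
    qintU_field]
  rfl

lemma hd_hecke : HD n ℓ κ (tK : K) (Lnat K tK n ℓ κ) (Tnat K tK n ℓ κ) where
  cyc := by
    intro h
    rw [Lnat, dif_pos h]
    exact hd_cyc K tK n ℓ κ h
  quad := by
    intro r hr
    rw [Tnat, dif_pos (by omega)]
    exact hd_quad K tK n ℓ κ _
  LL := by
    intro i j hi hj
    rw [Lnat, Lnat, dif_pos hi, dif_pos hj]
    have := RingQuot.mkAlgHom_rel K (HeckeRel.LL (R := K) (t := tK) (ℓ := ℓ) (κ := κ) ⟨i, hi⟩ ⟨j, hj⟩)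
    rwa [map_mul, map_mul] at this
  braid := by
    intro r hr
    rw [Tnat, Tnat, dif_pos (by omega), dif_pos (by omega)]
    have := RingQuot.mkAlgHom_rel K (HeckeRel.braid (R := K) (t := tK) (ℓ := ℓ) (κ := κ)
      (⟨r, by omega⟩ : Fin (n - 1)) ⟨r + 1, by omega⟩ rfl)
    rwa [map_mul, map_mul, map_mul, map_mul] at this
  TL := by
    intro r k hr hk h1 h2
    rw [Tnat, Lnat, dif_pos hk, dif_pos (show r < n - 1 by omega)]
    have := RingQuot.mkAlgHom_rel K (HeckeRel.TL (R := K) (t := tK) (ℓ := ℓ) (κ := κ)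
      (⟨r, by omega⟩ : Fin (n - 1)) ⟨k, hk⟩ ⟨h1, h2⟩)
    rw [map_mul, map_mul] at this
    exact this.symm
  LT := by
    intro r hr
    rw [Tnat, Lnat, Lnat, dif_pos (by omega), dif_pos (by omega), dif_pos (by omega)]
    exact hd_LT K tK n ℓ κ ⟨r, by omega⟩
  LT2 := by
    intro r hr
    rw [Tnat, Lnat, Lnat, dif_pos (by omega), dif_pos (by omega), dif_pos (by omega)]
    exact LT2_of tK.ne_zero (hd_quad K tK n ℓ κ ⟨r, by omega⟩) (hd_LT K tK n ℓ κ ⟨r, by omega⟩)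

/-- The eigenspace condition for a tableau. -/
def ET (s : StdTableau ℓ n) (v : CycHecke K tK n ℓ κ) : Prop :=
  ∀ k : Fin n, Lgen K tK n ℓ κ k * v = qint (tK : K) (content κ s (k.1 + 1)) • v

lemma span_tab (hs : Sep (tK : K) n ℓ κ) (W : Submodule K (CycHecke K tK n ℓ κ))
    (hW : ∀ s v, ET K tK n ℓ κ s v → v ∈ W) (v : CycHecke K tK n ℓ κ) : v ∈ W := by
  refine span_paths hs (hd_hecke K tK n ℓ κ) W ?_ v
  intro N hN v hv
  apply hW (pathTab hN)
  intro k
  have h1 := hv k.1 k.2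
  rw [Lnat, dif_pos k.2, ← pathTab_node hN k.2] at h1
  exact h1

end Hecke

end Paper

namespace Paper

section Good

variable {K H ι : Type*} [Field K] [Ring H] [Algebra K H] {O : Subring K} [Algebra O H]

/-- The function `f` is realised by an element of the subalgebra. -/
def Good (E : ι → H → Prop) (A : Subalgebra O H) (f : ι → O) : Prop :=
  ∃ h ∈ A, Act E h (fun s => ((f s : O) : K))

variable {E : ι → H → Prop} {A : Subalgebra O H}

lemma Good.add {f g : ι → O} (hf : Good E A f) (hg : Good E A g) :
    Good E A (fun s => f s + g s) := by
  obtain ⟨x, hx, hx'⟩ := hf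
  obtain ⟨y, hy, hy'⟩ := hg
  exact ⟨x + y, add_mem hx hy, by simpa using hx'.add hy'⟩

lemma Good.mul {f g : ι → O} (hf : Good E A f) (hg : Good E A g) :
    Good E A (fun s => f s * g s) := by
  obtain ⟨x, hx, hx'⟩ := hf
  obtain ⟨y, hy, hy'⟩ := hg
  exact ⟨x * y, mul_mem hx hy, by simpa using hx'.mul hy'⟩

lemma Good.const (hc : ∀ o : O, algebraMap O H o = algebraMap K H (o : K)) (c : O) :
    Good E A (fun _ => c) :=
  ⟨algebraMap O H c, A.algebraMap_mem c, by rw [hc]; exact Act.const _⟩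

lemma Good.sub_const (hc : ∀ o : O, algebraMap O H o = algebraMap K H (o : K)) {f : ι → O}
    (hf : Good E A f) (c : O) : Good E A (fun s => f s - c) := by
  have := hf.add (Good.const hc (-c))
  simpa [sub_eq_add_neg] using this

lemma Good.prod (hc : ∀ o : O, algebraMap O H o = algebraMap K H (o : K)) {α : Type*}
    (S : Finset α) (f : α → ι → O)
    (hf : ∀ a ∈ S, Good E A (f a)) : Good E A (fun s => ∏ a ∈ S, f a s) := by
  induction S using Finset.induction_on with
  | empty => simpa using Good.const hc 1
  | insert a S ha ih =>
    simp only [Finset.prod_insert ha]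
    exact (hf a (by simp)).mul (ih (fun b hb => hf b (by simp [hb])))

lemma Good.poly (hc : ∀ o : O, algebraMap O H o = algebraMap K H (o : K)) {f : ι → O}
    (hf : Good E A f) (g : Polynomial O) : Good E A (fun s => g.eval (f s)) := by
  induction g using Polynomial.induction_on' with
  | add p q hp hq => simpa using hp.add hq
  | monomial m a =>
    have : ∀ m : ℕ, Good E A (fun s => f s ^ m) := by
      intro m
      induction m with
      | zero => simpa using Good.const hc 1
      | succ m ih => simpa [pow_succ] using ih.mul hf
    simpa using (Good.const hc a).mul (this m)

lemma Good.mvpoly (hc : ∀ o : O, algebraMap O H o = algebraMap K H (o : K)) {n : ℕ}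
    {f : ι → Fin n → O} (hf : ∀ k, Good E A (fun s => f s k)) (g : MvPolynomial (Fin n) O) :
    Good E A (fun s => MvPolynomial.eval (f s) g) := by
  induction g using MvPolynomial.induction_on with
  | C a => simpa using Good.const hc a
  | add p q hp hq => simpa using hp.add hq
  | mul_X p k hp => simpa using hp.mul (hf k)

/-- Main extraction: a function which is `φ⁻¹` on a subset and `0` elsewhere is good. -/
lemma Good.inv [Finite ι] (hc : ∀ o : O, algebraMap O H o = algebraMap K H (o : K))
    {P : ι → Prop} {φ a : ι → O} (hφ : Good E A φ) (ha : Good E A a)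
    (h1 : ∀ s, P s → IsUnit (φ s)) (h2 : ∀ s, P s → IsUnit (a s)) (h3 : ∀ s, ¬ P s → a s = 0) :
    ∃ h ∈ A, Act E h (fun s => if P s then (((φ s : O) : K))⁻¹ else 0) := by
  have hfin : Set.Finite ((fun s => φ s * a s) '' {s | P s}) := Set.toFinite _
  obtain ⟨g, hg⟩ := inv_poly hfin.toFinset (by
    intro u hu
    rw [Set.Finite.mem_toFinset] at hu
    obtain ⟨s, hs, rfl⟩ := hu
    exact (h1 s hs).mul (h2 s hs))
  obtain ⟨h, hh, hact⟩ := ha.mul ((hφ.mul ha).poly hc g)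
  refine ⟨h, hh, ?_⟩
  convert hact using 2 with s
  split_ifs with hs
  · have := hg (φ s * a s) (by rw [Set.Finite.mem_toFinset]; exact ⟨s, hs, rfl⟩)
    rw [mul_assoc] at this
    have h5 : ((φ s : O) : K) * ((a s * g.eval (φ s * a s) : O) : K) = 1 := by
      rw [← Subring.coe_mul, this]
      rfl
    exact inv_eq_of_mul_eq_one_right h5
  · simp [h3 s hs]

end Good

lemma act_Fidem (K : Type*) [Field K] (tK : Kˣ) (n ℓ : ℕ) (κ : ℕ → ℤ)
    (hs : Sep (tK : K) n ℓ κ) (T : StdTableau ℓ n) :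
    Act (ET K tK n ℓ κ) (Fidem K tK n ℓ κ T) (fun s => if s = T then (1 : K) else 0) := by
  have h1 : Act (ET K tK n ℓ κ) (Fidem K tK n ℓ κ T) (fun s =>
      ((List.finRange n).map (fun k =>
        (((contFinset ℓ n κ).sort (· ≤ ·)).map (fun c =>
          if qint (tK : K) (content κ T (k.1 + 1)) ≠ qint (tK : K) c then
            (qint (tK : K) (content κ s (k.1 + 1)) - qint (tK : K) c) *
              ((qint (tK : K) (content κ T (k.1 + 1)) - qint (tK : K) c)⁻¹)
          else 1)).prod)).prod) := by
    unfold Fidem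
    refine Act.list_prod (List.finRange n) _ (fun k s =>
        (((contFinset ℓ n κ).sort (· ≤ ·)).map (fun c =>
          if qint (tK : K) (content κ T (k.1 + 1)) ≠ qint (tK : K) c then
            (qint (tK : K) (content κ s (k.1 + 1)) - qint (tK : K) c) *
              ((qint (tK : K) (content κ T (k.1 + 1)) - qint (tK : K) c)⁻¹)
          else 1)).prod) ?_
    intro k _
    refine Act.list_prod ((contFinset ℓ n κ).sort (· ≤ ·)) _ (fun c s =>
          if qint (tK : K) (content κ T (k.1 + 1)) ≠ qint (tK : K) c then
            (qint (tK : K) (content κ s (k.1 + 1)) - qint (tK : K) c) *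
              ((qint (tK : K) (content κ T (k.1 + 1)) - qint (tK : K) c)⁻¹)
          else 1) ?_
    intro c _
    split_ifs with hc
    · refine Act.mul (Act.sub ?_ (Act.const _)) (Act.const _)
      exact fun s v hv => hv k
    · exact Act.one
  convert h1 using 2 with s
  symm
  split_ifs with h
  · subst h
    apply List.prod_eq_one
    intro x hx
    simp only [List.mem_map] at hx
    obtain ⟨k, _, rfl⟩ := hx
    apply List.prod_eq_one
    intro x hx
    simp only [List.mem_map] at hx
    obtain ⟨c, _, rfl⟩ := hx
    split_ifs with hc
    · exact mul_inv_cancel₀ (sub_ne_zero.2 hc)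
    · rfl
  · have : ∃ k, ∃ hk : k < n, qint (tK : K) (content κ s (k + 1)) ≠ qint (tK : K) (content κ T (k + 1)) := by
      by_contra hcon
      push Not at hcon
      exact h (tab_sep hs s T hcon)
    obtain ⟨k, hk, hne⟩ := this
    apply List.prod_eq_zero
    rw [List.mem_map]
    refine ⟨⟨k, hk⟩, List.mem_finRange _, ?_⟩
    apply List.prod_eq_zero
    rw [List.mem_map]
    refine ⟨content κ s (k + 1), (Finset.mem_sort _).2 (content_mem κ s hk), ?_⟩
    rw [if_pos hne.symm, sub_self, zero_mul]

theorem main_gen (n ℓ e : ℕ) (κ : ℕ → ℤ) (K : Type*) [Field K] (O : Subring K) (t : Oˣ)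
    (hO : IsIdempotentSubring O t e n ℓ κ)
    {H : Type*} [Ring H] [Algebra K H] [Algebra O H]
    (hcompat : ∀ o : O, algebraMap O H o = algebraMap K H (o : K))
    (i : Fin n → ZMod e) (φ : MvPolynomial (Fin n) O)
    (hφ : ∀ T : StdTableau ℓ n, resSeq e κ T = i →
      IsUnit (MvPolynomial.eval (fun k => qintU t (content κ T (k.1 + 1))) φ))
    (E : StdTableau ℓ n → H → Prop)
    (hE : ∀ W : Submodule K H, (∀ s v, E s v → v ∈ W) → ∀ v, v ∈ W)
    (A : Subalgebra O H) (Lg : Fin n → H) (hLA : ∀ k, Lg k ∈ A)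
    (hL : ∀ k : Fin n, Act E (Lg k) (fun s => qint ((t : O) : K) (content κ s (k.1 + 1))))
    (Fd : StdTableau ℓ n → H)
    (hF : ∀ T, Act E (Fd T) (fun s => if s = T then (1 : K) else 0)) :
    (∑ᶠ T : {T : StdTableau ℓ n // resSeq e κ T = i},
        algebraMap K H
          (((MvPolynomial.eval (fun k => qintU t (content κ T.1 (k.1 + 1))) φ : O) : K)⁻¹) *
          Fd T.1) ∈ A := by
  have := finite_tab ℓ n
  have := Fintype.ofFinite {T : StdTableau ℓ n // resSeq e κ T = i}
  have gL : ∀ k : Fin n, Good E A (fun s => qintU t (content κ s (k.1 + 1))) := by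
    intro k
    refine ⟨Lg k, hLA k, ?_⟩
    simp only [qintU_coe]
    exact hL k
  have gφ := Good.mvpoly hcompat gL φ
  have ga : Good E A (fun s => ∏ k : Fin n,
      ∏ c ∈ (contFinset ℓ n κ).filter (fun c : ℤ => ((c : ℤ) : ZMod e) ≠ i k),
        (qintU t (content κ s (k.1 + 1)) - qintU t c)) := by
    refine Good.prod hcompat Finset.univ (fun k s =>
      ∏ c ∈ (contFinset ℓ n κ).filter (fun c : ℤ => ((c : ℤ) : ZMod e) ≠ i k),
        (qintU t (content κ s (k.1 + 1)) - qintU t c)) ?_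
    intro k _
    refine Good.prod hcompat _ (fun c s => (qintU t (content κ s (k.1 + 1)) - qintU t c)) ?_
    intro c _
    exact (gL k).sub_const hcompat _
  obtain ⟨h, hh, hact⟩ := Good.inv hcompat (P := fun s => resSeq e κ s = i) gφ ga hφ (by
    intro s hs
    rw [IsUnit.prod_univ_iff]
    intro k
    rw [IsUnit.prod_iff]
    intro c hc
    rw [Finset.mem_filter] at hc
    rw [qintU_sub]
    refine (Units.isUnit _).mul (hO.2.1 _ ?_)
    rw [← ZMod.intCast_zmod_eq_zero_iff_dvd]
    intro h0
    apply hc.2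
    rw [← hs]
    push_cast at h0
    exact (sub_eq_zero.1 h0).symm) (by
    intro s hs
    have : ∃ k, resSeq e κ s k ≠ i k := by
      by_contra hcon
      push Not at hcon
      exact hs (funext hcon)
    obtain ⟨k, hk⟩ := this
    apply Finset.prod_eq_zero (Finset.mem_univ k)
    apply Finset.prod_eq_zero (i := content κ s (k.1 + 1))
    · rw [Finset.mem_filter]
      exact ⟨content_mem κ s k.2, hk⟩
    · rw [sub_self])
  rw [finsum_eq_sum_of_fintype]
  refine Set.mem_of_eq_of_mem (Act.ext hE ?_ hact) hh
  have hsum := Act.sum (E := E) Finset.univ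
    (fun T : {T : StdTableau ℓ n // resSeq e κ T = i} => algebraMap K H
          (((MvPolynomial.eval (fun k => qintU t (content κ T.1 (k.1 + 1))) φ : O) : K)⁻¹) *
          Fd T.1)
    (fun T s => (((MvPolynomial.eval (fun k => qintU t (content κ T.1 (k.1 + 1))) φ : O) : K)⁻¹) *
      (if s = T.1 then (1 : K) else 0))
    (fun T _ => (Act.const _).mul (hF T.1))
  refine Eq.subst (motive := fun f => Act E _ f) ?_ hsum
  funext s
  symm
  split_ifs with h
  · rw [Finset.sum_eq_single ⟨s, h⟩]
    · simp
    · intro b _ hb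
      rw [if_neg, mul_zero]
      intro hsb
      exact hb (Subtype.ext hsb.symm)
    · simp
  · symm
    apply Finset.sum_eq_zero
    intro b _
    rw [if_neg, mul_zero]
    intro hsb
    exact h (hsb ▸ b.2)

theorem main_aux (n ℓ e : ℕ) (κ : ℕ → ℤ) 
    (K : Type) [Field K] (O : Subring K) (t : Oˣ)
    (hO : IsIdempotentSubring O t e n ℓ κ)
    (tK : Kˣ) (htK : tK = Units.map O.subtype.toMonoidHom t)
    [instO : Algebra ↥O (CycHecke K tK n ℓ κ)]
    (hcompat : ∀ o : ↥O,
      algebraMap ↥O (CycHecke K tK n ℓ κ) o = algebraMap K (CycHecke K tK n ℓ κ) (o : K))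
    (i : Fin n → ZMod e) (φ : MvPolynomial (Fin n) ↥O)
    (hφ : ∀ T : StdTableau ℓ n, resSeq e κ T = i →
      IsUnit (MvPolynomial.eval (fun k => qintU t (content κ T (k.1 + 1))) φ)) :
    (∑ᶠ T : {T : StdTableau ℓ n // resSeq e κ T = i},
        algebraMap K (CycHecke K tK n ℓ κ)
          (((MvPolynomial.eval (fun k => qintU t (content κ T.1 (k.1 + 1))) φ : ↥O) : K)⁻¹) *
          Fidem K tK n ℓ κ T.1) ∈
      Algebra.adjoin ↥O {h : CycHecke K tK n ℓ κ | ∃ k : Fin n, h = Lgen K tK n ℓ κ k} := by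
  have htk : (tK : K) = ((t : O) : K) := by rw [htK]; rfl
  have hs : Sep (tK : K) n ℓ κ := by
    rw [htk]
    exact sep_of hO.1
  refine main_gen n ℓ e κ K O t hO hcompat i φ hφ (ET K tK n ℓ κ) (span_tab K tK n ℓ κ hs) _
    (Lgen K tK n ℓ κ) ?_ ?_ (Fidem K tK n ℓ κ)
    (act_Fidem K tK n ℓ κ hs)
  · intro k
    exact Algebra.subset_adjoin ⟨k, rfl⟩
  · intro k s v hv
    rw [← htk]
    exact hv k

end Paper

namespace Paper

/-- Proposition P:Invertible: for a polynomial `φ ∈ O[X_1, …, X_n]`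
taking unit values on the contents of all tableaux in `Std(i)`, the renormalised
idempotent `f_i^φ = Σ_{T ∈ Std(i)} φ(T)^{-1} F_T` lies in the `O`-subalgebra of
`H_n(K, t, κ)` generated by `L_1, …, L_n`. -/
theorem renormalised_idempotent_integral (n ℓ e : ℕ) (hℓ : 1 ≤ ℓ) (he : 2 ≤ e)
    (κ : ℕ → ℤ) (hκ : ∀ l, l + 1 < ℓ → (n : ℤ) ≤ κ l - κ (l + 1))
    (K : Type) [Field K] (O : Subring K) (t : Oˣ)
    (hO : IsIdempotentSubring O t e n ℓ κ)
    (tK : Kˣ) (htK : tK = Units.map O.subtype.toMonoidHom t)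
    [instO : Algebra ↥O (CycHecke K tK n ℓ κ)]
    (hcompat : ∀ o : ↥O,
      algebraMap ↥O (CycHecke K tK n ℓ κ) o = algebraMap K (CycHecke K tK n ℓ κ) (o : K))
    (i : Fin n → ZMod e) (φ : MvPolynomial (Fin n) ↥O)
    (hφ : ∀ T : StdTableau ℓ n, resSeq e κ T = i →
      IsUnit (MvPolynomial.eval (fun k => qintU t (content κ T (k.1 + 1))) φ)) :
    (∑ᶠ T : {T : StdTableau ℓ n // resSeq e κ T = i},
        algebraMap K (CycHecke K tK n ℓ κ)
          (((MvPolynomial.eval (fun k => qintU t (content κ T.1 (k.1 + 1))) φ : ↥O) : K)⁻¹) *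
          Fidem K tK n ℓ κ T.1) ∈
      Algebra.adjoin ↥O {h : CycHecke K tK n ℓ κ | ∃ k : Fin n, h = Lgen K tK n ℓ κ k} := by
  exact main_aux n ℓ e κ K O t hO tK htK hcompat i φ hφ

end Paper
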